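/- arXiv:1408.0846 — 5 statements merged into one kernel-verified Lean document; each statement's English description precedes it below -/
import Mathlib

section
/- Let k ≥ 4, let G be a k-Ore graph, and let uv be an edge of G such that ρ_{k,G−uv}(W) > (k+1)(k−2) for every W ⊆ V(G) with 2 ≤ |W| ≤ |V(G)|−1. Then for each vertex w ∈ V(G) − {u,v}, there is a proper (k−1)-coloring φ of G − uv such that φ(w) ≠ φ(u) = φ(v). -/
open SimpleGraph

section Defs

variable {V : Type*}

instance instDecidableInduceAdj (G : SimpleGraph V) [DecidableRel G.Adj] (s : Set V) :
    DecidableRel (G.induce s).Adj := fun a b => ‹DecidableRel G.Adj› a.1 b.1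

instance instDecidableDeleteEdgeAdj [DecidableEq V] (G : SimpleGraph V) [DecidableRel G.Adj]
    (e : Sym2 V) : DecidableRel (G.deleteEdges {e}).Adj := fun a b =>
  decidable_of_iff (G.Adj a b ∧ ¬s(a, b) = e) (by simp)

/-- The `k`-potential of a vertex subset `R` of a graph `G`:
`ρ_{k,G}(R) = (k+1)(k-2)|R| - 2(k-1)|E(G[R])|`, where `G[R]` is the induced subgraph. -/
def potential (k : ℕ) (G : SimpleGraph V) [Fintype V] [DecidableEq V] [DecidableRel G.Adj]
    (R : Finset V) : ℤ :=
  ((k : ℤ) + 1) * ((k : ℤ) - 2) * R.card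
    - 2 * ((k : ℤ) - 1) * ((G.induce (R : Set V)).edgeFinset.card)

/-- A graph is `k`-critical if its chromatic number is `k` and every proper subgraph is
`(k-1)`-colorable. -/
def IsKCritical (k : ℕ) (G : SimpleGraph V) : Prop :=
  G.chromaticNumber = k ∧ ∀ H : SimpleGraph V, H < G → H.Colorable (k - 1)

/-- The graph underlying the DHGO-composition: delete the edge `xy` from `G₁`, split the vertex
`z` of `G₂` into two vertices, identify `x` with the half of `z` joined to the neighbors of `z`
lying in `P` and identify `y` with the half joined to the remaining neighbors of `z`. -/
def dhgoGraph {V₁ V₂ : Type*} (G₁ : SimpleGraph V₁) (G₂ : SimpleGraph V₂)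
    (x y : V₁) (z : V₂) (P : Set V₂) :
    SimpleGraph (V₁ ⊕ {w : V₂ // w ≠ z}) :=
  SimpleGraph.fromRel (fun a b =>
    match a, b with
    | Sum.inl a, Sum.inl b => G₁.Adj a b ∧ s(a, b) ≠ s(x, y)
    | Sum.inl a, Sum.inr b => (a = x ∧ (b : V₂) ∈ P) ∨ (a = y ∧ (b : V₂) ∈ G₂.neighborSet z \ P)
    | Sum.inr a, Sum.inr b => G₂.Adj a b
    | _, _ => False)

/-- `G` is a DHGO-composition of `G₁` and `G₂`: some edge `xy` of `G₁` is deleted, some vertex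
`z` of `G₂` is split into two vertices of positive degree (its neighborhood is partitioned into
two nonempty parts `P` and `N(z) \ P`), and `x`, `y` are identified with the two halves of `z`. -/
def IsDHGO {V₁ V₂ U : Type*} (G : SimpleGraph U) (G₁ : SimpleGraph V₁) (G₂ : SimpleGraph V₂) :
    Prop :=
  ∃ (x y : V₁) (z : V₂) (P : Set V₂),
    G₁.Adj x y ∧ P ⊆ G₂.neighborSet z ∧ P.Nonempty ∧ (G₂.neighborSet z \ P).Nonempty ∧
    Nonempty (G ≃g dhgoGraph G₁ G₂ x y z P)

/-- `k`-Ore graphs on the canonical finite vertex types `Fin n`: graphs obtained from copies of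
`K_k` by a sequence of DHGO-compositions. -/
inductive IsOreFin (k : ℕ) : ∀ {n : ℕ}, SimpleGraph (Fin n) → Prop
  | complete {n : ℕ} {G : SimpleGraph (Fin n)}
      (h : Nonempty (G ≃g (⊤ : SimpleGraph (Fin k)))) : IsOreFin k G
  | comp {n₁ n₂ n : ℕ} {G₁ : SimpleGraph (Fin n₁)} {G₂ : SimpleGraph (Fin n₂)}
      {G : SimpleGraph (Fin n)} (h₁ : IsOreFin k G₁) (h₂ : IsOreFin k G₂)
      (h : IsDHGO G G₁ G₂) : IsOreFin k G

/-- A graph is a `k`-Ore graph if it is obtained from copies of `K_k` by a sequence of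
DHGO-compositions. -/
def IsKOre (k : ℕ) {V : Type*} (G : SimpleGraph V) : Prop :=
  ∃ (n : ℕ) (H : SimpleGraph (Fin n)), IsOreFin k H ∧ Nonempty (G ≃g H)

/-- `y_k = max {2k - 6, k² - 5k + 2}`. -/
def yk (k : ℕ) : ℤ := max (2 * (k : ℤ) - 6) ((k : ℤ) ^ 2 - 5 * (k : ℤ) + 2)

/-- A `k`-critical graph is `k`-extremal if `2(k-1)|E(G)| = (k+1)(k-2)|V(G)| - k(k-3)`. -/
def IsKExtremal (k : ℕ) {V : Type*} [Fintype V] [DecidableEq V] (G : SimpleGraph V)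
    [DecidableRel G.Adj] : Prop :=
  IsKCritical k G ∧
    2 * ((k : ℤ) - 1) * G.edgeFinset.card =
      ((k : ℤ) + 1) * ((k : ℤ) - 2) * Fintype.card V - (k : ℤ) * ((k : ℤ) - 3)

/-- A graph is 3-connected if it has more than 3 vertices and deleting any set of at most 2
vertices leaves it connected. -/
def IsThreeConnected {V : Type*} [Fintype V] (G : SimpleGraph V) : Prop :=
  3 < Fintype.card V ∧ ∀ s : Set V, s.ncard ≤ 2 → (G.induce sᶜ).Connected

/-- `Q` is a `k`-quasi-`xy`-vertex: `G[Q]` is `(k-1)`-colorable, every proper `(k-1)`-coloring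
of `G[Q]` gives `x` and `y` the same color, and for every edge `e` of `G[Q]` the graph
`G[Q] - e` has a proper `(k-1)`-coloring giving `x` and `y` different colors. -/
def IsQuasiVertex (k : ℕ) {V : Type*} [DecidableEq V] (G : SimpleGraph V) (x y : V)
    (Q : Set V) : Prop :=
  ∃ (hx : x ∈ Q) (hy : y ∈ Q),
    (G.induce Q).Colorable (k - 1) ∧
    (∀ C : (G.induce Q).Coloring (Fin (k - 1)), C ⟨x, hx⟩ = C ⟨y, hy⟩) ∧
    (∀ a b : Q, (G.induce Q).Adj a b →
      ∃ C : ((G.induce Q).deleteEdges {s(a, b)}).Coloring (Fin (k - 1)),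
        C ⟨x, hx⟩ ≠ C ⟨y, hy⟩)

/-- A set `S` of vertices is standard if `ρ_{k,G}(S) = (k+1)(k-2)`, `G` has a separating set
`{x,y} ⊆ S` such that `S - {x,y}` induces a component of `G - {x,y}`, and `S` is a
`k`-quasi-`xy`-vertex. -/
def IsStandardSet (k : ℕ) {V : Type*} [Fintype V] [DecidableEq V] (G : SimpleGraph V)
    [DecidableRel G.Adj] (S : Finset V) : Prop :=
  potential k G S = ((k : ℤ) + 1) * ((k : ℤ) - 2) ∧
  ∃ x y : V, x ≠ y ∧ x ∈ S ∧ y ∈ S ∧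
    ¬(G.induce ({x, y}ᶜ : Set V)).Connected ∧
    (G.induce ((S : Set V) \ {x, y})).Connected ∧
    (∀ a ∈ (S : Set V) \ {x, y}, ∀ b : V, G.Adj a b → b ∈ (S : Set V) ∪ {x, y}) ∧
    IsQuasiVertex k G x y (S : Set V)

end Defs


namespace OreAux

open Finset

/-- ordered adjacent pairs -/
noncomputable def pr {V : Type*} (H : SimpleGraph V) (R : Finset V) : ℕ :=
  by classical exact ((R ×ˢ R).filter fun p => H.Adj p.1 p.2).card

/-- potential through ordered pairs -/
noncomputable def rho {V : Type*} (k : ℕ) (H : SimpleGraph V) (R : Finset V) : ℤ :=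
  ((k : ℤ) + 1) * ((k : ℤ) - 2) * R.card - ((k : ℤ) - 1) * pr H R

theorem pr_eq {V : Type*} [Fintype V] [DecidableEq V] (G : SimpleGraph V) [DecidableRel G.Adj]
    (R : Finset V) : pr G R = 2 * (G.induce (R : Set V)).edgeFinset.card := by
  classical
  rw [← SimpleGraph.dart_card_eq_twice_card_edges, ← Finset.card_univ]
  unfold pr
  symm
  refine Finset.card_bij (fun d _ => ((d.fst : V), (d.snd : V))) ?_ ?_ ?_
  · intro d _
    have := d.adj
    simp only [Finset.mem_filter, Finset.mem_product]
    refine ⟨⟨?_, ?_⟩, ?_⟩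
    · exact_mod_cast d.fst.2
    · exact_mod_cast d.snd.2
    · simpa using this
  · intro d _ e _ h
    simp only [Prod.mk.injEq] at h
    ext
    · exact h.1
    · exact h.2
  · rintro ⟨a, b⟩ h
    simp only [Finset.mem_filter, Finset.mem_product] at h
    refine ⟨⟨(⟨a, by exact_mod_cast h.1.1⟩, ⟨b, by exact_mod_cast h.1.2⟩), ?_⟩, by simp, rfl⟩
    simpa using h.2

theorem potential_eq {V : Type*} [Fintype V] [DecidableEq V] (k : ℕ) (G : SimpleGraph V)
    [DecidableRel G.Adj] (R : Finset V) : potential k G R = rho k G R := by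
  unfold potential rho
  rw [pr_eq]
  push_cast
  ring

theorem rho_mono {V W : Type*} [DecidableEq W] {k : ℕ} (hk : 4 ≤ k) (H : SimpleGraph V)
    (H' : SimpleGraph W) (R : Finset V) (g : V → W) (hg : Set.InjOn g R)
    (h : ∀ a ∈ R, ∀ b ∈ R, H.Adj a b → H'.Adj (g a) (g b)) :
    rho k H' (R.image g) ≤ rho k H R := by
  classical
  have h1 : pr H R ≤ pr H' (R.image g) := by
    unfold pr
    refine Finset.card_le_card_of_injOn (fun p => (g p.1, g p.2)) ?_ ?_
    · rintro ⟨a, b⟩ hp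
      simp only [Finset.coe_filter, Finset.mem_product, Set.mem_ofPred_eq] at hp ⊢
      exact ⟨⟨Finset.mem_image_of_mem _ hp.1.1, Finset.mem_image_of_mem _ hp.1.2⟩,
        h _ hp.1.1 _ hp.1.2 hp.2⟩
    · rintro ⟨a, b⟩ hp ⟨a', b'⟩ hp' he
      simp only [Finset.coe_filter, Finset.mem_product, Set.mem_ofPred_eq] at hp hp'
      simp only [Prod.mk.injEq] at he ⊢
      exact ⟨hg hp.1.1 hp'.1.1 he.1, hg hp.1.2 hp'.1.2 he.2⟩
  unfold rho
  rw [Finset.card_image_of_injOn hg]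
  have : (0:ℤ) ≤ (k:ℤ) - 1 := by omega
  have h2 : (pr H R : ℤ) ≤ pr H' (R.image g) := by exact_mod_cast h1
  nlinarith

theorem rho_mono_id {V : Type*} {k : ℕ} (hk : 4 ≤ k) (H H' : SimpleGraph V)
    (R : Finset V) (h : ∀ a ∈ R, ∀ b ∈ R, H.Adj a b → H'.Adj a b) :
    rho k H' R ≤ rho k H R := by
  classical
  have := rho_mono hk H H' R id Function.injective_id.injOn (by simpa using h)
  simpa using this

theorem pr_del {V : Type*} (H H' : SimpleGraph V) (R : Finset V) (x y : V)
    (h : ∀ a b, H.Adj a b → s(a, b) ≠ s(x, y) → H'.Adj a b) : pr H R ≤ pr H' R + 2 := by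
  classical
  unfold pr
  have : ((R ×ˢ R).filter fun p => H.Adj p.1 p.2) ⊆
      ((R ×ˢ R).filter fun p => H'.Adj p.1 p.2) ∪ {(x, y), (y, x)} := by
    rintro ⟨a, b⟩ hp
    simp only [Finset.mem_filter, Finset.mem_product, Finset.mem_union, Finset.mem_insert,
      Finset.mem_singleton, Prod.mk.injEq] at hp ⊢
    by_cases hs : s(a, b) = s(x, y)
    · right
      simpa using hs
    · left
      exact ⟨hp.1, h _ _ hp.2 hs⟩
  refine (Finset.card_le_card this).trans ((Finset.card_union_le _ _).trans ?_)
  have := Finset.card_le_two (a := (x, y)) (b := (y, x))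
  omega

theorem rho_del {V : Type*} {k : ℕ} (hk : 4 ≤ k) (H H' : SimpleGraph V) (R : Finset V) (x y : V)
    (h : ∀ a b, H.Adj a b → s(a, b) ≠ s(x, y) → H'.Adj a b) :
    rho k H' R ≤ rho k H R + 2 * ((k : ℤ) - 1) := by
  have h1 := pr_del H H' R x y h
  have h2 : (pr H R : ℤ) ≤ pr H' R + 2 := by exact_mod_cast h1
  unfold rho
  have : (0:ℤ) ≤ (k:ℤ) - 1 := by omega
  nlinarith

/-- gluing count -/
theorem rho_glue {V₁ V₂ : Type*} [Fintype V₂] [DecidableEq V₁] [DecidableEq V₂] {k : ℕ} (hk : 4 ≤ k)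
    (z : V₂) (x y : V₁)
    (H : SimpleGraph (V₁ ⊕ {w : V₂ // w ≠ z})) (H₁ : SimpleGraph V₁) (G₂ : SimpleGraph V₂)
    (R : Finset V₁) (hx : x ∈ R) (hy : y ∈ R)
    (h1 : ∀ a b, H₁.Adj a b → s(a, b) ≠ s(x, y) → H.Adj (Sum.inl a) (Sum.inl b))
    (h2 : ∀ a b : {w : V₂ // w ≠ z}, G₂.Adj a b → H.Adj (Sum.inr a) (Sum.inr b))
    (h3 : ∀ b : {w : V₂ // w ≠ z}, G₂.Adj z b →
      H.Adj (Sum.inl x) (Sum.inr b) ∨ H.Adj (Sum.inl y) (Sum.inr b)) :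
    rho k H (R.disjSum Finset.univ) ≤ rho k H₁ R + rho k G₂ Finset.univ - (k : ℤ) * ((k : ℤ) - 3) := by
  classical
  have key : pr H₁ R + pr G₂ Finset.univ ≤ pr H (R.disjSum Finset.univ) + 2 := by
    obtain ⟨H₁', hH'⟩ : ∃ H' : SimpleGraph V₁, ∀ a b, H'.Adj a b ↔ H.Adj (Sum.inl a) (Sum.inl b) :=
      ⟨H.comap Sum.inl, fun a b => Iff.rfl⟩
    have e1 : pr H₁ R ≤ pr H₁' R + 2 := pr_del H₁ H₁' R x y (fun a b hab hs => (hH' a b).2 (h1 a b hab hs))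
    let q : V₂ → V₂ → V₁ ⊕ {w : V₂ // w ≠ z} := fun a b =>
      if ha : a = z then
        (if hb : b = z then Sum.inl x else
          if H.Adj (Sum.inl x) (Sum.inr ⟨b, hb⟩) then Sum.inl x else Sum.inl y)
      else Sum.inr ⟨a, ha⟩
    have e2 : pr H₁' R + pr G₂ Finset.univ ≤ pr H (R.disjSum Finset.univ) := by
      unfold pr
      rw [← Finset.card_image_of_injOn (s := (R ×ˢ R).filter fun p => H₁'.Adj p.1 p.2)
        (f := fun p => ((Sum.inl p.1 : V₁ ⊕ {w : V₂ // w ≠ z}), (Sum.inl p.2 : V₁ ⊕ {w : V₂ // w ≠ z})))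
        (by rintro ⟨a, b⟩ _ ⟨a', b'⟩ _ h; simpa using h),
        ← Finset.card_image_of_injOn
          (s := (Finset.univ ×ˢ Finset.univ).filter fun p : V₂ × V₂ => G₂.Adj p.1 p.2)
        (f := fun p => (q p.1 p.2, q p.2 p.1)) ?_, ← Finset.card_union_of_disjoint]
      · apply Finset.card_le_card
        apply Finset.union_subset
        · intro p hp
          simp only [Finset.mem_image, Finset.mem_filter, Finset.mem_product, Prod.exists] at hp
          obtain ⟨a, b, ⟨⟨ha, hb⟩, hab⟩, rfl⟩ := hp
          simp only [Finset.mem_filter, Finset.mem_product, Finset.inl_mem_disjSum]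
          exact ⟨⟨ha, hb⟩, (hH' _ _).1 hab⟩
        · intro p hp
          simp only [Finset.mem_image, Finset.mem_filter, Finset.mem_product, Prod.exists,
            Finset.mem_univ, true_and] at hp
          obtain ⟨a, b, hab, rfl⟩ := hp
          have hne := hab.ne
          simp only [Finset.mem_filter, Finset.mem_product]
          by_cases ha : a = z
          · have hb : b ≠ z := fun h => hne (ha.trans h.symm)
            have := h3 ⟨b, hb⟩ (ha ▸ hab)
            by_cases hc : H.Adj (Sum.inl x) (Sum.inr ⟨b, hb⟩)
            · simp [q, ha, hb, hc, hx]
            · simp only [hc, false_or] at this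
              simp [q, ha, hb, hc, hy, this]
          · by_cases hb : b = z
            · have := h3 ⟨a, ha⟩ (hb ▸ hab.symm)
              by_cases hc : H.Adj (Sum.inl x) (Sum.inr ⟨a, ha⟩)
              · simp [q, ha, hb, hc, hx, hc.symm]
              · simp only [hc, false_or] at this
                simp [q, ha, hb, hc, hy, this.symm]
            · have := h2 ⟨a, ha⟩ ⟨b, hb⟩ hab
              simp [q, ha, hb, this]
      · rw [Finset.disjoint_left]
        intro p hp hp'
        simp only [Finset.mem_image, Finset.mem_filter, Finset.mem_product, Prod.exists,
            Finset.mem_univ, true_and] at hp hp'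
        obtain ⟨a, b, hab, rfl⟩ := hp
        obtain ⟨c, d, hcd, he⟩ := hp'
        have hne := hcd.ne
        simp only [Prod.mk.injEq, q] at he
        by_cases hc : c = z
        · have hd : d ≠ z := fun h => hne (hc.trans h.symm)
          simp [hd] at he
        · simp [hc] at he
      · rintro ⟨a, b⟩ hp ⟨a', b'⟩ hp' he
        simp only [Finset.coe_filter, Finset.mem_product, Set.mem_ofPred_eq, Finset.mem_univ,
          true_and] at hp hp'
        simp only [Prod.mk.injEq] at he ⊢
        have inr_ne : ∀ a b, a ≠ z → ∀ h : a ≠ z, q a b = Sum.inr ⟨a, h⟩ := by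
          intro a b ha h; simp [q, ha]
        have inl_e : ∀ b, ∃ s, q z b = Sum.inl s := by
          intro b
          simp only [q, dite_true]
          split_ifs <;> exact ⟨_, rfl⟩
        have main : ∀ a b a' b', q a b = q a' b' → a = a' := by
          intro a b a' b' h
          by_cases ha : a = z <;> by_cases ha' : a' = z
          · rw [ha, ha']
          · obtain ⟨s, hs⟩ := inl_e b
            rw [ha, hs, inr_ne a' b' ha' ha'] at h
            simp at h
          · obtain ⟨s, hs⟩ := inl_e b'
            rw [ha', hs, inr_ne a b ha ha] at h
            simp at h
          · rw [inr_ne a b ha ha, inr_ne a' b' ha' ha'] at h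
            simpa using h
        exact ⟨main _ _ _ _ he.1, main _ _ _ _ he.2⟩
    omega
  have key' : (pr H₁ R : ℤ) + pr G₂ Finset.univ ≤ pr H (R.disjSum Finset.univ) + 2 := by
    exact_mod_cast key
  have hc : (R.disjSum (Finset.univ : Finset {w : V₂ // w ≠ z})).card + 1 =
      R.card + (Finset.univ : Finset V₂).card := by
    rw [Finset.card_disjSum, Finset.card_univ, Finset.card_univ]
    have : Fintype.card {w : V₂ // w ≠ z} = Fintype.card V₂ - 1 := by
      simp
    have : 0 < Fintype.card V₂ := Fintype.card_pos_iff.2 ⟨z⟩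
    omega
  have hc' : ((R.disjSum (Finset.univ : Finset {w : V₂ // w ≠ z})).card : ℤ) =
      R.card + (Finset.univ : Finset V₂).card - 1 := by
    have : ((R.disjSum (Finset.univ : Finset {w : V₂ // w ≠ z})).card : ℤ) + 1 =
      R.card + (Finset.univ : Finset V₂).card := by exact_mod_cast hc
    linarith
  unfold rho
  rw [hc']
  have : (0:ℤ) ≤ (k:ℤ) - 1 := by omega
  nlinarith

/-- extension of a split vertex -/
def Ext {V C : Type*} (G : SimpleGraph V) (t : V) (f φ : V → C) : Prop :=
  (∀ a b, a ≠ t → b ≠ t → G.Adj a b → φ a ≠ φ b) ∧ ∀ n, G.Adj t n → φ n ≠ f n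

/-- remove edges at z with wrong label -/
def cut {V C : Type*} (G : SimpleGraph V) (z : V) (f : V → C) (c : C) : SimpleGraph V where
  Adj a b := G.Adj a b ∧ (a = z → f b = c) ∧ (b = z → f a = c)
  symm := ⟨fun _ _ h => ⟨h.1.symm, h.2.2, h.2.1⟩⟩
  loopless := ⟨fun a h => G.loopless.irrefl a h.1⟩

/-- nonconstant on neighbours -/
def NC {V C : Type*} (G : SimpleGraph V) (z : V) (f : V → C) : Prop :=
  ∃ a b, G.Adj z a ∧ G.Adj z b ∧ f a ≠ f b

/-- the potential condition -/
def PC {V : Type*} [Fintype V] (k : ℕ) (H : SimpleGraph V) : Prop :=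
  ∀ R : Finset V, 2 ≤ R.card → R ≠ Finset.univ → ((k : ℤ) + 1) * ((k : ℤ) - 2) < rho k H R

/-- unique bad neighbour -/
def Bad {V C : Type*} (G : SimpleGraph V) (z : V) (f : V → C) (w : V) (c : C) : Prop :=
  G.Adj z w ∧ f w ≠ c ∧ ∀ n, G.Adj z n → n ≠ w → f n = c

/-- all inductive properties -/
structure Good {V : Type*} [Fintype V] (k : ℕ) (G : SimpleGraph V) : Prop where
  nc : ¬ ∃ φ : V → Fin (k - 1), ∀ a b, G.Adj a b → φ a ≠ φ b
  deg : ∀ x y, G.Adj x y → ∃ n, n ≠ y ∧ G.Adj x n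
  ext : ∀ (t : V) (f : V → Fin (k - 1)), NC G t f → ∃ φ, Ext G t f φ
  pot : rho k G Finset.univ ≤ (k : ℤ) * ((k : ℤ) - 3)
  extp : ∀ (z : V) (f : V → Fin (k - 1)) (w : V) (c : Fin (k - 1)), w ≠ z → NC G z f →
    PC k (cut G z f c) → ¬ Bad G z f w c → ∃ φ, Ext G z f φ ∧ φ w ≠ c

theorem Good.extFull {V : Type*} [Fintype V] {k : ℕ} (hk : 4 ≤ k) {G : SimpleGraph V}
    (hG : Good k G) (z : V) (f : V → Fin (k - 1)) (w : V) (c : Fin (k - 1)) (hw : w ≠ z)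
    (hn : NC G z f)
    (hp : ∀ R : Finset V, 2 ≤ R.card → ((k : ℤ) + 1) * ((k : ℤ) - 2) < rho k (cut G z f c) R) :
    ∃ φ, Ext G z f φ ∧ φ w ≠ c := by
  classical
  refine hG.extp z f w c hw hn (fun R h _ => hp R h) ?_
  rintro ⟨h1, h2, h3⟩
  have h4 := hp Finset.univ (by
    have := Finset.card_le_univ ({z, w} : Finset V)
    rw [Finset.card_pair hw.symm] at this
    exact this)
  have h5 := rho_del hk G (cut G z f c) Finset.univ z w (by
    intro a b hab hs
    refine ⟨hab, ?_, ?_⟩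
    · rintro rfl
      apply h3 _ hab
      rintro rfl
      exact hs rfl
    · rintro rfl
      apply h3 _ hab.symm
      rintro rfl
      exact hs Sym2.eq_swap)
  have h6 := hG.pot
  nlinarith

theorem exists_ne_color {k : ℕ} (hk : 4 ≤ k) (a b : Fin (k - 1)) : ∃ e, e ≠ a ∧ e ≠ b := by
  classical
  by_contra! h
  have : (Finset.univ : Finset (Fin (k-1))) ⊆ {a, b} := by
    intro e _
    by_cases he : e = a
    · simp [he]
    · simp [h e he]
  have := Finset.card_le_card this
  have h2 := Finset.card_le_two (a := a) (b := b)
  simp at this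
  omega

theorem Good.edge {V : Type*} [Fintype V] {k : ℕ} (hk : 4 ≤ k) {G : SimpleGraph V}
    (hG : Good k G) (x y : V) (hxy : G.Adj x y) (c : Fin (k - 1)) :
    ∃ φ : V → Fin (k - 1), φ x = c ∧ φ y = c ∧
      ∀ a b, G.Adj a b → s(a, b) ≠ s(x, y) → φ a ≠ φ b := by
  classical
  obtain ⟨n, hn, hxn⟩ := hG.deg x y hxy
  obtain ⟨c', hc', -⟩ := exists_ne_color hk c c
  obtain ⟨φ, h1, h2⟩ := hG.ext x (fun m => if m = y then c' else c)
    ⟨n, y, hxn, hxy, by simpa [hn] using hc'.symm⟩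
  have key : ∀ b, G.Adj x b → b ≠ y → φ b ≠ c := by
    intro b hb hby
    simpa [hby] using h2 b hb
  have hcol : ∀ a b, G.Adj a b → s(a, b) ≠ s(x, y) →
      Function.update φ x c a ≠ Function.update φ x c b := by
    intro a b hab hs
    by_cases ha : a = x
    · subst ha
      have hb : b ≠ a := hab.ne'
      have : b ≠ y := by rintro rfl; exact hs rfl
      simpa [hb] using (key b hab this).symm
    · by_cases hb : b = x
      · subst hb
        have : a ≠ y := by rintro rfl; exact hs Sym2.eq_swap
        simpa [ha] using (key a hab.symm this)
      · simpa [ha, hb] using h1 a b ha hb hab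
  refine ⟨Function.update φ x c, by simp, ?_, hcol⟩
  by_contra hy
  apply hG.nc
  refine ⟨Function.update φ x c, fun a b hab => ?_⟩
  by_cases hs : s(a, b) = s(x, y)
  · rcases Sym2.eq_iff.1 hs with ⟨rfl, rfl⟩ | ⟨rfl, rfl⟩
    · simpa using Ne.symm hy
    · simpa using hy
  · exact hcol a b hab hs

section Dhgo

variable {V₁ V₂ : Type*} {G₁ : SimpleGraph V₁} {G₂ : SimpleGraph V₂} {x y : V₁} {z : V₂}
  {P : Set V₂}

theorem adj_ll (a b : V₁) : (dhgoGraph G₁ G₂ x y z P).Adj (Sum.inl a) (Sum.inl b) ↔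
    G₁.Adj a b ∧ s(a, b) ≠ s(x, y) := by
  simp only [dhgoGraph, SimpleGraph.fromRel_adj]
  constructor
  · rintro ⟨-, h | h⟩
    · exact h
    · exact ⟨h.1.symm, by rw [Sym2.eq_swap]; exact h.2⟩
  · intro h
    exact ⟨by simpa using h.1.ne, Or.inl h⟩

theorem adj_lr (a : V₁) (b : {w : V₂ // w ≠ z}) :
    (dhgoGraph G₁ G₂ x y z P).Adj (Sum.inl a) (Sum.inr b) ↔
    (a = x ∧ (b : V₂) ∈ P) ∨ (a = y ∧ G₂.Adj z b ∧ (b : V₂) ∉ P) := by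
  simp [dhgoGraph, SimpleGraph.fromRel_adj]

theorem adj_rl (a : V₁) (b : {w : V₂ // w ≠ z}) :
    (dhgoGraph G₁ G₂ x y z P).Adj (Sum.inr b) (Sum.inl a) ↔
    (a = x ∧ (b : V₂) ∈ P) ∨ (a = y ∧ G₂.Adj z b ∧ (b : V₂) ∉ P) := by
  rw [SimpleGraph.adj_comm, adj_lr]

theorem adj_rr (a b : {w : V₂ // w ≠ z}) :
    (dhgoGraph G₁ G₂ x y z P).Adj (Sum.inr a) (Sum.inr b) ↔ G₂.Adj a b := by
  simp only [dhgoGraph, SimpleGraph.fromRel_adj]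
  constructor
  · rintro ⟨-, h | h⟩
    · exact h
    · exact h.symm
  · intro h
    refine ⟨?_, Or.inl h⟩
    intro e
    simp only [Sum.inr.injEq] at e
    exact h.ne (by rw [e])

theorem dhgo_swap (hP : P ⊆ G₂.neighborSet z) :
    dhgoGraph G₁ G₂ y x z (G₂.neighborSet z \ P) = dhgoGraph G₁ G₂ x y z P := by
  have hP' : ∀ b, b ∈ P → G₂.Adj z b := fun b hb => hP hb
  ext a b
  rcases a with a | a <;> rcases b with b | b
  · rw [adj_ll, adj_ll, Sym2.eq_swap (a := y)]
  · rw [adj_lr, adj_lr]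
    simp only [Set.mem_sdiff, SimpleGraph.mem_neighborSet]
    have := hP' b
    tauto
  · rw [adj_rl, adj_rl]
    simp only [Set.mem_sdiff, SimpleGraph.mem_neighborSet]
    have := hP' a
    tauto
  · rw [adj_rr, adj_rr]

/-- standing hypotheses -/
structure Setup (G₁ : SimpleGraph V₁) (G₂ : SimpleGraph V₂) (x y : V₁) (z : V₂) (P : Set V₂) :
    Prop where
  hxy : G₁.Adj x y
  hP : ∀ b, b ∈ P → G₂.Adj z b
  hp : ∃ p, p ∈ P
  hq : ∃ q, G₂.Adj z q ∧ q ∉ P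

theorem Setup.swap (h : Setup G₁ G₂ x y z P) : Setup G₁ G₂ y x z (G₂.neighborSet z \ P) := by
  refine ⟨h.hxy.symm, fun b hb => hb.1, ?_, ?_⟩
  · obtain ⟨q, h1, h2⟩ := h.hq
    exact ⟨q, h1, h2⟩
  · obtain ⟨p, hp⟩ := h.hp
    exact ⟨p, h.hP p hp, fun h' => h'.2 hp⟩

/-- transport of the potential condition to the split side -/
theorem lift2 [Fintype V₁] [Fintype V₂] [DecidableEq V₂] {k : ℕ} (hk : 4 ≤ k)
    (H : SimpleGraph (V₁ ⊕ {w : V₂ // w ≠ z})) (s s' : V₁) (hs : s' ≠ s) (hH : PC k H)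
    (H2 : SimpleGraph V₂)
    (h1 : ∀ a b : {w : V₂ // w ≠ z}, H2.Adj a b → H.Adj (Sum.inr a) (Sum.inr b))
    (h2 : ∀ b : {w : V₂ // w ≠ z}, H2.Adj z b → H.Adj (Sum.inl s) (Sum.inr b)) :
    ∀ R : Finset V₂, 2 ≤ R.card → ((k : ℤ) + 1) * ((k : ℤ) - 2) < rho k H2 R := by
  classical
  intro R hR
  let g : V₂ → V₁ ⊕ {w : V₂ // w ≠ z} := fun a => if h : a = z then Sum.inl s else Sum.inr ⟨a, h⟩
  have hg : Function.Injective g := by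
    intro a b hab
    simp only [g] at hab
    split_ifs at hab with ha hb
    · rw [ha, hb]
    · simpa using hab
  refine lt_of_lt_of_le (hH (R.image g) ?_ ?_) (rho_mono hk H2 H R g hg.injOn ?_)
  · rwa [Finset.card_image_of_injective _ hg]
  · intro h
    have : (Sum.inl s' : V₁ ⊕ {w : V₂ // w ≠ z}) ∈ R.image g := by rw [h]; simp
    obtain ⟨a, -, ha⟩ := Finset.mem_image.1 this
    simp only [g] at ha
    split_ifs at ha
    simp only [Sum.inl.injEq] at ha
    exact hs ha.symm
  · intro a _ b _ hab
    have hne := hab.ne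
    by_cases ha : a = z
    · have hb : b ≠ z := fun h => hne (ha.trans h.symm)
      have := h2 ⟨b, hb⟩ (ha ▸ hab)
      simpa [g, ha, hb] using this
    · by_cases hb : b = z
      · have := (h2 ⟨a, ha⟩ (hb ▸ hab.symm)).symm
        simpa [g, ha, hb] using this
      · have := h1 ⟨a, ha⟩ ⟨b, hb⟩ hab
        simpa [g, ha, hb] using this

/-- transport of the potential condition to the edge side -/
theorem lift1 [Fintype V₁] [Fintype V₂] [DecidableEq V₂] {k : ℕ} (hk : 4 ≤ k)
    (hG₂ : Good k G₂)
    (H : SimpleGraph (V₁ ⊕ {w : V₂ // w ≠ z})) (hH : PC k H)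
    (H1 : SimpleGraph V₁)
    (h1 : ∀ a b, H1.Adj a b → s(a, b) ≠ s(x, y) → H.Adj (Sum.inl a) (Sum.inl b))
    (h2 : ∀ a b : {w : V₂ // w ≠ z}, G₂.Adj a b → H.Adj (Sum.inr a) (Sum.inr b))
    (h3 : ∀ b : {w : V₂ // w ≠ z}, G₂.Adj z b →
      H.Adj (Sum.inl x) (Sum.inr b) ∨ H.Adj (Sum.inl y) (Sum.inr b))
    (hne : ∃ q : V₂, q ≠ z) : PC k H1 := by
  classical
  intro R hR hR'
  by_cases hxy : x ∈ R ∧ y ∈ R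
  · have := rho_glue hk z x y H H1 G₂ R hxy.1 hxy.2 h1 h2 h3
    have h4 := hG₂.pot
    have h5 := hH (R.disjSum Finset.univ) (by rw [Finset.card_disjSum]; omega) (by
      intro h
      apply hR'
      ext a
      have : (Sum.inl a : V₁ ⊕ {w : V₂ // w ≠ z}) ∈ R.disjSum Finset.univ := by rw [h]; simp
      simpa using this)
    linarith
  · refine lt_of_lt_of_le (hH (R.image Sum.inl) ?_ ?_)
      (rho_mono hk H1 H R Sum.inl Sum.inl_injective.injOn ?_)
    · rwa [Finset.card_image_of_injective _ Sum.inl_injective]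
    · intro h
      obtain ⟨q, hq⟩ := hne
      have : (Sum.inr ⟨q, hq⟩ : V₁ ⊕ {w : V₂ // w ≠ z}) ∈ R.image Sum.inl := by rw [h]; simp
      simp at this
    · intro a ha b hb hab
      apply h1 a b hab
      intro hs
      rcases Sym2.eq_iff.1 hs with ⟨rfl, rfl⟩ | ⟨rfl, rfl⟩
      · exact hxy ⟨ha, hb⟩
      · exact hxy ⟨hb, ha⟩

/-- transport to the edge side when all edges survive -/
theorem lift1' [Fintype V₁] [Fintype V₂] [DecidableEq V₂] {k : ℕ} (hk : 4 ≤ k)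
    (H : SimpleGraph (V₁ ⊕ {w : V₂ // w ≠ z})) (hH : PC k H)
    (H1 : SimpleGraph V₁)
    (h1 : ∀ a b, H1.Adj a b → H.Adj (Sum.inl a) (Sum.inl b))
    (hne : ∃ q : V₂, q ≠ z) :
    ∀ R : Finset V₁, 2 ≤ R.card → ((k : ℤ) + 1) * ((k : ℤ) - 2) < rho k H1 R := by
  classical
  intro R hR
  refine lt_of_lt_of_le (hH (R.image Sum.inl) ?_ ?_)
      (rho_mono hk H1 H R Sum.inl Sum.inl_injective.injOn ?_)
  · rwa [Finset.card_image_of_injective _ Sum.inl_injective]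
  · intro h
    obtain ⟨q, hq⟩ := hne
    have : (Sum.inr ⟨q, hq⟩ : V₁ ⊕ {w : V₂ // w ≠ z}) ∈ R.image Sum.inl := by rw [h]; simp
    simp at this
  · intro a ha b hb hab
    exact h1 a b hab

/-- the edge side cannot survive completely -/
theorem noA [Fintype V₁] [Fintype V₂] [DecidableEq V₂] {k : ℕ} (hk : 4 ≤ k)
    (hG₁ : Good k G₁) (hxy : G₁.Adj x y)
    (H : SimpleGraph (V₁ ⊕ {w : V₂ // w ≠ z})) (hH : PC k H)
    (h1 : ∀ a b, G₁.Adj a b → s(a, b) ≠ s(x, y) → H.Adj (Sum.inl a) (Sum.inl b))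
    (hne : ∃ q : V₂, q ≠ z) : False := by
  classical
  have h2 := lift1' hk H hH (H.comap Sum.inl) (fun a b h => h) hne Finset.univ (by
    have := Finset.card_le_univ ({x, y} : Finset V₁)
    rw [Finset.card_pair hxy.ne] at this
    exact this)
  have h3 := rho_del hk G₁ (H.comap Sum.inl) Finset.univ x y (fun a b hab hs => h1 a b hab hs)
  have h4 := hG₁.pot
  nlinarith

variable {k : ℕ}

theorem Setup.ne_z (S : Setup G₁ G₂ x y z P) : ∃ q : V₂, q ≠ z := by
  obtain ⟨q, h, -⟩ := S.hq
  exact ⟨q, h.ne'⟩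

theorem nc_dhgo [Fintype V₁] [Fintype V₂] (S : Setup G₁ G₂ x y z P) (g1 : Good k G₁)
    (g2 : Good k G₂) :
    ¬ ∃ φ : V₁ ⊕ {w : V₂ // w ≠ z} → Fin (k - 1),
      ∀ a b, (dhgoGraph G₁ G₂ x y z P).Adj a b → φ a ≠ φ b := by
  classical
  rintro ⟨φ, h⟩
  by_cases he : φ (Sum.inl x) = φ (Sum.inl y)
  · apply g2.nc
    have hz : ∀ b : {w : V₂ // w ≠ z}, G₂.Adj z b → φ (Sum.inl x) ≠ φ (Sum.inr b) := by
      intro b hb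
      by_cases hbP : (b : V₂) ∈ P
      · exact h _ _ ((adj_lr _ _).2 (Or.inl ⟨rfl, hbP⟩))
      · rw [he]
        exact h _ _ ((adj_lr _ _).2 (Or.inr ⟨rfl, hb, hbP⟩))
    refine ⟨fun a => if ha : a = z then φ (Sum.inl x) else φ (Sum.inr ⟨a, ha⟩), ?_⟩
    intro a b hab
    have hne := hab.ne
    by_cases ha : a = z
    · have hb : b ≠ z := fun h => hne (ha.trans h.symm)
      simpa [ha, hb] using hz ⟨b, hb⟩ (ha ▸ hab)
    · by_cases hb : b = z
      · simpa [ha, hb] using (hz ⟨a, ha⟩ (hb ▸ hab.symm)).symm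
      · simpa [ha, hb] using h _ _ ((adj_rr ⟨a, ha⟩ ⟨b, hb⟩).2 hab)
  · apply g1.nc
    refine ⟨fun a => φ (Sum.inl a), fun a b hab => ?_⟩
    by_cases hs : s(a, b) = s(x, y)
    · rcases Sym2.eq_iff.1 hs with ⟨rfl, rfl⟩ | ⟨rfl, rfl⟩
      · exact he
      · exact Ne.symm he
    · exact h _ _ ((adj_ll _ _).2 ⟨hab, hs⟩)

theorem deg_dhgo [Fintype V₁] [Fintype V₂] (S : Setup G₁ G₂ x y z P) (g1 : Good k G₁)
    (g2 : Good k G₂) : ∀ a b, (dhgoGraph G₁ G₂ x y z P).Adj a b →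
      ∃ n, n ≠ b ∧ (dhgoGraph G₁ G₂ x y z P).Adj a n := by
  classical
  -- it suffices to find two distinct neighbours
  suffices h : ∀ a, ∃ m n, m ≠ n ∧ (dhgoGraph G₁ G₂ x y z P).Adj a m ∧
      (dhgoGraph G₁ G₂ x y z P).Adj a n ∨ ∀ b, ¬ (dhgoGraph G₁ G₂ x y z P).Adj a b by
    intro a b hab
    obtain ⟨m, n, h | h⟩ := h a
    · by_cases hm : m = b
      · exact ⟨n, by rw [← hm]; exact h.1.symm, h.2.2⟩
      · exact ⟨m, hm, h.2.1⟩
    · exact absurd hab (h b)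
  obtain ⟨p, hp⟩ := S.hp
  obtain ⟨q, hq, hqP⟩ := S.hq
  have hpz := (S.hP p hp).ne'
  have hqz := hq.ne'
  rintro (a | a)
  · by_cases hax : a = x
    · subst hax
      obtain ⟨n, hn, han⟩ := g1.deg a y S.hxy
      refine ⟨Sum.inl n, Sum.inr ⟨p, hpz⟩, Or.inl ⟨by simp, ?_, ?_⟩⟩
      · rw [adj_ll]
        refine ⟨han, ?_⟩
        intro h
        rcases Sym2.eq_iff.1 h with ⟨-, h⟩ | ⟨h, h'⟩
        · exact hn h
        · exact S.hxy.ne h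
      · rw [adj_lr]
        exact Or.inl ⟨rfl, hp⟩
    · by_cases hay : a = y
      · subst hay
        obtain ⟨n, hn, han⟩ := g1.deg a x S.hxy.symm
        refine ⟨Sum.inl n, Sum.inr ⟨q, hqz⟩, Or.inl ⟨by simp, ?_, ?_⟩⟩
        · rw [adj_ll]
          refine ⟨han, ?_⟩
          intro h
          rcases Sym2.eq_iff.1 h with ⟨h, -⟩ | ⟨-, h⟩
          · exact hax h
          · exact hn h
        · rw [adj_lr]
          exact Or.inr ⟨rfl, hq, hqP⟩
      · by_cases hb : ∃ b, G₁.Adj a b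
        · obtain ⟨b, hb⟩ := hb
          obtain ⟨n, hn, han⟩ := g1.deg a b hb
          refine ⟨Sum.inl n, Sum.inl b, Or.inl ⟨by simpa using hn, ?_, ?_⟩⟩ <;>
          · rw [adj_ll]
            refine ⟨by assumption, ?_⟩
            intro h
            rcases Sym2.eq_iff.1 h with ⟨h, -⟩ | ⟨h, -⟩
            · exact hax h
            · exact hay h
        · refine ⟨Sum.inl a, Sum.inl a, Or.inr ?_⟩
          rintro (b | b) hab
          · rw [adj_ll] at hab
            exact hb ⟨b, hab.1⟩
          · rw [adj_lr] at hab
            tauto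
  · have key : ∀ b, G₂.Adj a b → ∃ m, (dhgoGraph G₁ G₂ x y z P).Adj (Sum.inr a) m ∧
        (∀ h : b ≠ z, m = Sum.inr ⟨b, h⟩) ∧ (b = z → ∃ s, m = Sum.inl s) := by
      intro b hb
      by_cases hbz : b = z
      · subst hbz
        by_cases haP : (a : V₂) ∈ P
        · exact ⟨Sum.inl x, (adj_rl _ _).2 (Or.inl ⟨rfl, haP⟩), fun h => absurd rfl h,
            fun _ => ⟨_, rfl⟩⟩
        · exact ⟨Sum.inl y, (adj_rl _ _).2 (Or.inr ⟨rfl, hb.symm, haP⟩), fun h => absurd rfl h,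
            fun _ => ⟨_, rfl⟩⟩
      · exact ⟨Sum.inr ⟨b, hbz⟩, (adj_rr _ _).2 hb, fun _ => rfl, fun h => absurd h hbz⟩
    by_cases hb : ∃ b, G₂.Adj a b
    · obtain ⟨b, hb⟩ := hb
      obtain ⟨n, hn, han⟩ := g2.deg a b hb
      obtain ⟨m1, h1, h2, h3⟩ := key b hb
      obtain ⟨m2, h4, h5, h6⟩ := key n han
      refine ⟨m1, m2, Or.inl ⟨?_, h1, h4⟩⟩
      intro he
      by_cases hbz : b = z
      · have hnz : n ≠ z := fun h => hn (h.trans hbz.symm)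
        obtain ⟨s, hs⟩ := h3 hbz
        rw [h5 hnz, hs] at he
        simp at he
      · rw [h2 hbz] at he
        by_cases hnz : n = z
        · obtain ⟨s, hs⟩ := h6 hnz
          rw [hs] at he
          simp at he
        · rw [h5 hnz] at he
          simp only [Sum.inr.injEq, Subtype.mk.injEq] at he
          exact hn he.symm
    · refine ⟨Sum.inr a, Sum.inr a, Or.inr ?_⟩
      rintro (b | b) hab
      · rw [adj_rl] at hab
        rcases hab with h | h
        · exact hb ⟨z, (S.hP _ h.2).symm⟩
        · exact hb ⟨z, h.2.1.symm⟩
      · rw [adj_rr] at hab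
        exact hb ⟨b, hab⟩

theorem pot_dhgo [Fintype V₁] [Fintype V₂] [DecidableEq V₂] (hk : 4 ≤ k)
    (S : Setup G₁ G₂ x y z P) (g1 : Good k G₁)
    (g2 : Good k G₂) :
    rho k (dhgoGraph G₁ G₂ x y z P) Finset.univ ≤ (k : ℤ) * ((k : ℤ) - 3) := by
  classical
  have h := rho_glue hk z x y (dhgoGraph G₁ G₂ x y z P) G₁ G₂ Finset.univ (by simp) (by simp)
    (fun a b hab hs => (adj_ll _ _).2 ⟨hab, hs⟩) (fun a b hab => (adj_rr _ _).2 hab)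
    (fun b hb => by
      rw [adj_lr, adj_lr]
      by_cases hbP : (b : V₂) ∈ P
      · exact Or.inl (Or.inl ⟨rfl, hbP⟩)
      · exact Or.inr (Or.inr ⟨rfl, hb, hbP⟩))
  rw [Finset.univ_disjSum_univ] at h
  have := g1.pot
  have := g2.pot
  linarith

/-- gluing extension colourings at a vertex of the edge side different from x, y -/
theorem glue_l {C : Type*} (S : Setup G₁ G₂ x y z P) (t : V₁) (htx : t ≠ x) (hty : t ≠ y)
    (f : V₁ ⊕ {w : V₂ // w ≠ z} → C) (φ₁ : V₁ → C) (φ₂ f₂ : V₂ → C)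
    (h1 : Ext G₁ t (fun a => f (Sum.inl a)) φ₁)
    (h2 : Ext G₂ z f₂ φ₂) (hfP : ∀ b ∈ P, f₂ b = φ₁ x)
    (hfQ : ∀ b, G₂.Adj z b → b ∉ P → f₂ b = φ₁ y) :
    Ext (dhgoGraph G₁ G₂ x y z P) (Sum.inl t) f (Sum.elim φ₁ (fun b => φ₂ b)) := by
  have key : ∀ (a : V₁) (b : {w : V₂ // w ≠ z}), (a = x ∧ (b : V₂) ∈ P) ∨
      (a = y ∧ G₂.Adj z b ∧ (b : V₂) ∉ P) → φ₂ b ≠ φ₁ a := by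
    rintro a b (⟨rfl, hb⟩ | ⟨rfl, hb, hb'⟩)
    · rw [← hfP b hb]
      exact h2.2 _ (S.hP _ hb)
    · rw [← hfQ b hb hb']
      exact h2.2 _ hb
  refine ⟨?_, ?_⟩
  · rintro (a | a) (b | b) ha hb hab
    · rw [adj_ll] at hab
      exact h1.1 a b (by simpa using ha) (by simpa using hb) hab.1
    · rw [adj_lr] at hab
      exact (key a b hab).symm
    · rw [adj_rl] at hab
      exact key b a hab
    · rw [adj_rr] at hab
      exact h2.1 a b a.2 b.2 hab
  · rintro (b | b) hab
    · rw [adj_ll] at hab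
      exact h1.2 b hab.1
    · rw [adj_lr] at hab
      tauto

/-- gluing extension colourings at x -/
theorem glue_x {C : Type*} (S : Setup G₁ G₂ x y z P)
    (f : V₁ ⊕ {w : V₂ // w ≠ z} → C) (φ₁ f₁ : V₁ → C) (φ₂ f₂ : V₂ → C)
    (h1 : Ext G₁ x f₁ φ₁) (hf₁ : ∀ a, a ≠ y → f₁ a = f (Sum.inl a))
    (h2 : Ext G₂ z f₂ φ₂) (hfP : ∀ b : {w : V₂ // w ≠ z}, (b : V₂) ∈ P → f₂ b = f (Sum.inr b))
    (hfQ : ∀ b, G₂.Adj z b → b ∉ P → f₂ b = φ₁ y) :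
    Ext (dhgoGraph G₁ G₂ x y z P) (Sum.inl x) f (Sum.elim φ₁ (fun b => φ₂ b)) := by
  have key : ∀ (a : V₁) (b : {w : V₂ // w ≠ z}), a ≠ x → (a = x ∧ (b : V₂) ∈ P) ∨
      (a = y ∧ G₂.Adj z b ∧ (b : V₂) ∉ P) → φ₂ b ≠ φ₁ a := by
    rintro a b hax (⟨rfl, hb⟩ | ⟨rfl, hb, hb'⟩)
    · exact absurd rfl hax
    · rw [← hfQ b hb hb']
      exact h2.2 _ hb
  refine ⟨?_, ?_⟩
  · rintro (a | a) (b | b) ha hb hab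
    · rw [adj_ll] at hab
      exact h1.1 a b (by simpa using ha) (by simpa using hb) hab.1
    · rw [adj_lr] at hab
      exact (key a b (by simpa using ha) hab).symm
    · rw [adj_rl] at hab
      exact key b a (by simpa using hb) hab
    · rw [adj_rr] at hab
      exact h2.1 a b a.2 b.2 hab
  · rintro (b | b) hab
    · rw [adj_ll] at hab
      have hb : b ≠ y := by rintro rfl; exact hab.2 rfl
      have := h1.2 b hab.1
      rwa [hf₁ b hb] at this
    · rw [adj_lr] at hab
      rcases hab with h | h
      · have := h2.2 b (S.hP _ h.2)
        rwa [hfP b h.2] at this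
      · exact absurd h.1 S.hxy.ne

theorem ext_r [Fintype V₁] [Fintype V₂] (hk : 4 ≤ k)
    (S : Setup G₁ G₂ x y z P) (g1 : Good k G₁) (g2 : Good k G₂)
    (t : {w : V₂ // w ≠ z}) (f : V₁ ⊕ {w : V₂ // w ≠ z} → Fin (k - 1))
    (hn : NC (dhgoGraph G₁ G₂ x y z P) (Sum.inr t) f) :
    ∃ φ, Ext (dhgoGraph G₁ G₂ x y z P) (Sum.inr t) f φ := by
  classical
  let f₂ : V₂ → Fin (k - 1) := fun b => if h : b = z then
    (if (t : V₂) ∈ P then f (Sum.inl x) else f (Sum.inl y)) else f (Sum.inr ⟨b, h⟩)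
  have htr : ∀ a, (dhgoGraph G₁ G₂ x y z P).Adj (Sum.inr t) a →
      ∃ b, G₂.Adj t b ∧ f₂ b = f a := by
    rintro (a | a) ha
    · rw [adj_rl] at ha
      rcases ha with ⟨rfl, h⟩ | ⟨rfl, h, h'⟩
      · exact ⟨z, (S.hP _ h).symm, by simp [f₂, h]⟩
      · exact ⟨z, h.symm, by simp [f₂, h']⟩
    · rw [adj_rr] at ha
      exact ⟨a, ha, by simp [f₂, a.2]⟩
  obtain ⟨a, b, ha, hb, hab⟩ := hn
  obtain ⟨a', ha', hfa⟩ := htr a ha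
  obtain ⟨b', hb', hfb⟩ := htr b hb
  obtain ⟨φ₂, h1, h2⟩ := g2.ext t f₂ ⟨a', b', ha', hb', by rwa [hfa, hfb]⟩
  obtain ⟨φ₁, hx, hy, hc⟩ := g1.edge hk x y S.hxy (φ₂ z)
  have key : ∀ (a : V₁) (b : {w : V₂ // w ≠ z}), b ≠ t → (a = x ∧ (b : V₂) ∈ P) ∨
      (a = y ∧ G₂.Adj z b ∧ (b : V₂) ∉ P) → φ₂ b ≠ φ₁ a := by
    intro a b hbt h
    have hbt' : (b : V₂) ≠ t := fun h => hbt (Subtype.ext h)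
    rcases h with ⟨rfl, h⟩ | ⟨rfl, h, h'⟩
    · rw [hx]
      exact h1 b z hbt' t.2.symm (S.hP _ h).symm
    · rw [hy]
      exact h1 b z hbt' t.2.symm h.symm
  refine ⟨Sum.elim φ₁ (fun b => φ₂ b), ?_, ?_⟩
  · rintro (a | a) (b | b) ha hb hab
    · rw [adj_ll] at hab
      exact hc a b hab.1 hab.2
    · rw [adj_lr] at hab
      exact (key a b (by simpa using hb) hab).symm
    · rw [adj_rl] at hab
      exact key b a (by simpa using ha) hab
    · rw [adj_rr] at hab
      refine h1 a b ?_ ?_ hab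
      · intro h; exact ha (by rw [Subtype.ext h])
      · intro h; exact hb (by rw [Subtype.ext h])
  · rintro (b | b) hab
    · rw [adj_rl] at hab
      rcases hab with ⟨rfl, h⟩ | ⟨rfl, h, h'⟩
      · have := h2 z (S.hP _ h).symm
        simpa [f₂, h, hx] using this
      · have := h2 z h.symm
        simpa [f₂, h', hy] using this
    · rw [adj_rr] at hab
      have := h2 b hab
      simpa [f₂, b.2] using this

/-- labels on the split side from two colours -/
theorem NC_two {C : Type*} (S : Setup G₁ G₂ x y z P) (c d : C) (hcd : c ≠ d) (f₂ : V₂ → C)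
    (hfP : ∀ b ∈ P, f₂ b = c) (hfQ : ∀ b, G₂.Adj z b → b ∉ P → f₂ b = d) : NC G₂ z f₂ := by
  obtain ⟨p, hp⟩ := S.hp
  obtain ⟨q, hq, hqP⟩ := S.hq
  exact ⟨p, q, S.hP p hp, hq, by rwa [hfP p hp, hfQ q hq hqP]⟩

theorem NC_l {C : Type*} (t : V₁) (htx : t ≠ x) (hty : t ≠ y)
    (f : V₁ ⊕ {w : V₂ // w ≠ z} → C)
    (hn : NC (dhgoGraph G₁ G₂ x y z P) (Sum.inl t) f) : NC G₁ t (fun a => f (Sum.inl a)) := by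
  have htr : ∀ a, (dhgoGraph G₁ G₂ x y z P).Adj (Sum.inl t) a →
      ∃ b, G₁.Adj t b ∧ f (Sum.inl b) = f a := by
    rintro (a | a) ha
    · rw [adj_ll] at ha
      exact ⟨a, ha.1, rfl⟩
    · rw [adj_lr] at ha
      tauto
  obtain ⟨a, b, ha, hb, hab⟩ := hn
  obtain ⟨a', ha', hfa⟩ := htr a ha
  obtain ⟨b', hb', hfb⟩ := htr b hb
  exact ⟨a', b', ha', hb', by simpa [hfa, hfb] using hab⟩

theorem ext_l [Fintype V₁] [Fintype V₂]
    (S : Setup G₁ G₂ x y z P) (g1 : Good k G₁) (g2 : Good k G₂)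
    (t : V₁) (htx : t ≠ x) (hty : t ≠ y) (f : V₁ ⊕ {w : V₂ // w ≠ z} → Fin (k - 1))
    (hn : NC (dhgoGraph G₁ G₂ x y z P) (Sum.inl t) f) :
    ∃ φ, Ext (dhgoGraph G₁ G₂ x y z P) (Sum.inl t) f φ := by
  classical
  obtain ⟨φ₁, h1⟩ := g1.ext t _ (NC_l t htx hty f hn)
  have hne : φ₁ x ≠ φ₁ y := h1.1 x y htx.symm hty.symm S.hxy
  let f₂ : V₂ → Fin (k - 1) := fun b => if b ∈ P then φ₁ x else φ₁ y
  have hfP : ∀ b ∈ P, f₂ b = φ₁ x := fun b hb => by simp [f₂, hb]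
  have hfQ : ∀ b, G₂.Adj z b → b ∉ P → f₂ b = φ₁ y := fun b _ hb => by simp [f₂, hb]
  obtain ⟨φ₂, h2⟩ := g2.ext z f₂ (NC_two S _ _ hne f₂ hfP hfQ)
  exact ⟨_, glue_l S t htx hty f φ₁ φ₂ f₂ h1 h2 hfP hfQ⟩

end Dhgo

section Dhgo2

variable {V₁ V₂ : Type*} {G₁ : SimpleGraph V₁} {G₂ : SimpleGraph V₂} {x y : V₁} {z : V₂}
  {P : Set V₂} {k : ℕ}

open Classical in
/-- labels on the edge side -/
noncomputable def f1 {C : Type*} (y : V₁) (f : V₁ ⊕ {w : V₂ // w ≠ z} → C) (e : C) : V₁ → C :=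
  fun a => if a = y then e else f (Sum.inl a)

open Classical in
/-- labels on the split side -/
noncomputable def f2 {C : Type*} (P : Set V₂) (f : V₁ ⊕ {w : V₂ // w ≠ z} → C) (d : C) : V₂ → C :=
  fun b => if h : b = z then d else if b ∈ P then f (Sum.inr ⟨b, h⟩) else d

theorem f1_y {C : Type*} (f : V₁ ⊕ {w : V₂ // w ≠ z} → C) (e : C) : f1 y f e y = e := by
  simp [f1]

theorem f1_ne {C : Type*} (f : V₁ ⊕ {w : V₂ // w ≠ z} → C) (e : C) (a : V₁) (h : a ≠ y) :
    f1 y f e a = f (Sum.inl a) := by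
  simp [f1, h]

theorem f2_P {C : Type*} (f : V₁ ⊕ {w : V₂ // w ≠ z} → C) (d : C) (b : {w : V₂ // w ≠ z})
    (h : (b : V₂) ∈ P) : f2 P f d b = f (Sum.inr b) := by
  simp [f2, h, b.2]

theorem f2_Q {C : Type*} (f : V₁ ⊕ {w : V₂ // w ≠ z} → C) (d : C) (b : V₂)
    (h : b ∉ P) : f2 P f d b = d := by
  simp [f2, h]

theorem f1_NC {C : Type*} (S : Setup G₁ G₂ x y z P) (f : V₁ ⊕ {w : V₂ // w ≠ z} → C) (e : C)
    (n : V₁) (hn : n ≠ y) (hxn : G₁.Adj x n) (h : f (Sum.inl n) ≠ e) : NC G₁ x (f1 y f e) :=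
  ⟨n, y, hxn, S.hxy, by rwa [f1_y, f1_ne _ _ _ hn]⟩

theorem f2_NC {C : Type*} (S : Setup G₁ G₂ x y z P) (f : V₁ ⊕ {w : V₂ // w ≠ z} → C) (d : C)
    (p : {w : V₂ // w ≠ z}) (hp : (p : V₂) ∈ P) (h : f (Sum.inr p) ≠ d) :
    NC G₂ z (f2 P f d) := by
  obtain ⟨q, hq, hqP⟩ := S.hq
  exact ⟨p, q, S.hP p hp, hq, by rwa [f2_P _ _ _ hp, f2_Q _ _ _ hqP]⟩

theorem f2_NC' {C : Type*} (S : Setup G₁ G₂ x y z P) (f : V₁ ⊕ {w : V₂ // w ≠ z} → C) (d : C)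
    (p p' : {w : V₂ // w ≠ z}) (hp : (p : V₂) ∈ P) (hp' : (p' : V₂) ∈ P)
    (h : f (Sum.inr p) ≠ f (Sum.inr p')) :
    NC G₂ z (f2 P f d) :=
  ⟨p, p', S.hP p hp, S.hP p' hp', by rwa [f2_P _ _ _ hp, f2_P _ _ _ hp']⟩

theorem adj_x (S : Setup G₁ G₂ x y z P) (n : V₁) (hn : n ≠ y) (hxn : G₁.Adj x n) :
    (dhgoGraph G₁ G₂ x y z P).Adj (Sum.inl x) (Sum.inl n) := by
  rw [adj_ll]
  refine ⟨hxn, fun h => ?_⟩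
  rcases Sym2.eq_iff.1 h with ⟨-, h⟩ | ⟨h, -⟩
  · exact hn h
  · exact S.hxy.ne h

/-- if all of `P` has label `a`, some other neighbour of `x` has not -/
theorem exists_other {C : Type*} (S : Setup G₁ G₂ x y z P) (f : V₁ ⊕ {w : V₂ // w ≠ z} → C) (a : C)
    (hn : NC (dhgoGraph G₁ G₂ x y z P) (Sum.inl x) f)
    (h : ∀ p : {w : V₂ // w ≠ z}, (p : V₂) ∈ P → f (Sum.inr p) = a) :
    ∃ n, n ≠ y ∧ G₁.Adj x n ∧ f (Sum.inl n) ≠ a := by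
  by_contra! hc
  have : ∀ m, (dhgoGraph G₁ G₂ x y z P).Adj (Sum.inl x) m → f m = a := by
    rintro (m | m) hm
    · rw [adj_ll] at hm
      exact hc m (by rintro rfl; exact hm.2 rfl) hm.1
    · rw [adj_lr] at hm
      rcases hm with hm | hm
      · exact h m hm.2
      · exact absurd hm.1 S.hxy.ne
  obtain ⟨m, m', h1, h2, h3⟩ := hn
  exact h3 (by rw [this m h1, this m' h2])

theorem P_cases {C : Type*} (S : Setup G₁ G₂ x y z P) (f : V₁ ⊕ {w : V₂ // w ≠ z} → C) :
    (∃ p p' : {w : V₂ // w ≠ z}, (p : V₂) ∈ P ∧ (p' : V₂) ∈ P ∧ f (Sum.inr p) ≠ f (Sum.inr p')) ∨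
    ∃ p : {w : V₂ // w ≠ z}, (p : V₂) ∈ P ∧
      ∀ p' : {w : V₂ // w ≠ z}, (p' : V₂) ∈ P → f (Sum.inr p') = f (Sum.inr p) := by
  by_cases h : (∃ p p' : {w : V₂ // w ≠ z}, (p : V₂) ∈ P ∧ (p' : V₂) ∈ P ∧
      f (Sum.inr p) ≠ f (Sum.inr p'))
  · exact Or.inl h
  · right
    push Not at h
    obtain ⟨p, hp⟩ := S.hp
    exact ⟨⟨p, (S.hP p hp).ne'⟩, hp, fun p' hp' => h _ _ hp' hp⟩

theorem ext_x [Fintype V₁] [Fintype V₂] (hk : 4 ≤ k)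
    (S : Setup G₁ G₂ x y z P) (g1 : Good k G₁) (g2 : Good k G₂)
    (f : V₁ ⊕ {w : V₂ // w ≠ z} → Fin (k - 1))
    (hn : NC (dhgoGraph G₁ G₂ x y z P) (Sum.inl x) f) :
    ∃ φ, Ext (dhgoGraph G₁ G₂ x y z P) (Sum.inl x) f φ := by
  rcases P_cases S f with ⟨p, p', hp, hp', hne⟩ | ⟨p, hp, hall⟩
  · obtain ⟨n, hny, hxn⟩ := g1.deg x y S.hxy
    obtain ⟨e, he, -⟩ := exists_ne_color hk (f (Sum.inl n)) (f (Sum.inl n))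
    obtain ⟨φ₁, h1⟩ := g1.ext x _ (f1_NC S f e n hny hxn he.symm)
    obtain ⟨φ₂, h2⟩ := g2.ext z _ (f2_NC' S f (φ₁ y) p p' hp hp' hne)
    exact ⟨_, glue_x S f φ₁ _ φ₂ _ h1 (f1_ne f e) h2 (f2_P f _) (fun b _ hb => f2_Q f _ b hb)⟩
  · obtain ⟨n, hny, hxn, hfn⟩ := exists_other S f _ hn hall
    obtain ⟨φ₁, h1⟩ := g1.ext x _ (f1_NC S f _ n hny hxn hfn)
    have hd : φ₁ y ≠ f (Sum.inr p) := by simpa [f1_y] using h1.2 y S.hxy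
    obtain ⟨φ₂, h2⟩ := g2.ext z _ (f2_NC S f (φ₁ y) p hp hd.symm)
    exact ⟨_, glue_x S f φ₁ _ φ₂ _ h1 (f1_ne f _) h2 (f2_P f _) (fun b _ hb => f2_Q f _ b hb)⟩

theorem cut_ll {C : Type*} (f : V₁ ⊕ {w : V₂ // w ≠ z} → C) (c e : C)
    (a b : V₁) (h : (cut G₁ x (f1 y f e) c).Adj a b) (hs : s(a, b) ≠ s(x, y)) :
    (cut (dhgoGraph G₁ G₂ x y z P) (Sum.inl x) f c).Adj (Sum.inl a) (Sum.inl b) := by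
  obtain ⟨h1, h2, h3⟩ := h
  refine ⟨(adj_ll _ _).2 ⟨h1, hs⟩, ?_, ?_⟩
  · intro ha
    simp only [Sum.inl.injEq] at ha
    have hb : b ≠ y := by rintro rfl; exact hs (by rw [ha])
    have := h2 ha
    rwa [f1_ne _ _ _ hb] at this
  · intro ha
    simp only [Sum.inl.injEq] at ha
    have hb : a ≠ y := by rintro rfl; exact hs (by rw [ha, Sym2.eq_swap])
    have := h3 ha
    rwa [f1_ne _ _ _ hb] at this

theorem exists_other' [Fintype V₁] [Fintype V₂] [DecidableEq V₂] (hk : 4 ≤ k)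
    (S : Setup G₁ G₂ x y z P) (g1 : Good k G₁)
    (f : V₁ ⊕ {w : V₂ // w ≠ z} → Fin (k - 1)) (c : Fin (k - 1))
    (hPC : PC k (cut (dhgoGraph G₁ G₂ x y z P) (Sum.inl x) f c)) :
    ∃ n, n ≠ y ∧ G₁.Adj x n ∧ f (Sum.inl n) ≠ c := by
  by_contra! hc
  refine noA hk g1 S.hxy _ hPC ?_ S.ne_z
  intro a b hab hs
  refine ⟨(adj_ll _ _).2 ⟨hab, hs⟩, ?_, ?_⟩
  · intro ha
    simp only [Sum.inl.injEq] at ha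
    subst ha
    exact hc b (by rintro rfl; exact hs rfl) hab
  · intro ha
    simp only [Sum.inl.injEq] at ha
    subst ha
    exact hc a (by rintro rfl; exact hs Sym2.eq_swap) hab.symm

/-- edge side when the label at y is not c -/
theorem edge_ne [Fintype V₁] [Fintype V₂] [DecidableEq V₂] (hk : 4 ≤ k)
    (S : Setup G₁ G₂ x y z P) (g1 : Good k G₁)
    (f : V₁ ⊕ {w : V₂ // w ≠ z} → Fin (k - 1)) (c e : Fin (k - 1)) (hec : e ≠ c)
    (hPC : PC k (cut (dhgoGraph G₁ G₂ x y z P) (Sum.inl x) f c))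
    (hn : NC G₁ x (f1 y f e)) (w : V₁) (hw : w ≠ x) :
    ∃ φ, Ext G₁ x (f1 y f e) φ ∧ φ w ≠ c := by
  refine g1.extFull hk x _ w c hw hn ?_
  refine lift1' hk _ hPC _ ?_ S.ne_z
  intro a b hab
  refine cut_ll f c e a b hab ?_
  intro hs
  rcases Sym2.eq_iff.1 hs with ⟨rfl, rfl⟩ | ⟨rfl, rfl⟩
  · have := hab.2.1 rfl
    rw [f1_y] at this
    exact hec this
  · have := hab.2.2 rfl
    rw [f1_y] at this
    exact hec this

/-- split side when the colour at y is not c -/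
theorem split_ne [Fintype V₁] [Fintype V₂] [DecidableEq V₂] (hk : 4 ≤ k)
    (S : Setup G₁ G₂ x y z P) (g2 : Good k G₂)
    (f : V₁ ⊕ {w : V₂ // w ≠ z} → Fin (k - 1)) (c d : Fin (k - 1)) (hdc : d ≠ c)
    (hPC : PC k (cut (dhgoGraph G₁ G₂ x y z P) (Sum.inl x) f c))
    (hn : NC G₂ z (f2 P f d)) (w : V₂) (hw : w ≠ z) :
    ∃ φ, Ext G₂ z (f2 P f d) φ ∧ φ w ≠ c := by
  refine g2.extFull hk z _ w c hw hn ?_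
  refine lift2 hk _ x y S.hxy.ne' hPC _ ?_ ?_
  · intro a b hab
    exact ⟨(adj_rr _ _).2 hab.1, by simp, by simp⟩
  · intro b hb
    have h1 := hb.2.1 rfl
    have hbP : (b : V₂) ∈ P := by
      by_contra h
      rw [f2_Q _ _ _ h] at h1
      exact hdc h1
    rw [f2_P _ _ _ hbP] at h1
    exact ⟨(adj_lr _ _).2 (Or.inl ⟨rfl, hbP⟩), fun _ => h1, by simp⟩

theorem extp_x [Fintype V₁] [Fintype V₂] [DecidableEq V₂] (hk : 4 ≤ k)
    (S : Setup G₁ G₂ x y z P) (g1 : Good k G₁) (g2 : Good k G₂)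
    (f : V₁ ⊕ {w : V₂ // w ≠ z} → Fin (k - 1)) (w : V₁ ⊕ {w : V₂ // w ≠ z})
    (c : Fin (k - 1)) (hw : w ≠ Sum.inl x)
    (hn : NC (dhgoGraph G₁ G₂ x y z P) (Sum.inl x) f)
    (hPC : PC k (cut (dhgoGraph G₁ G₂ x y z P) (Sum.inl x) f c))
    (hbad : ¬ Bad (dhgoGraph G₁ G₂ x y z P) (Sum.inl x) f w c) :
    ∃ φ, Ext (dhgoGraph G₁ G₂ x y z P) (Sum.inl x) f φ ∧ φ w ≠ c := by
  have fin : ∀ φ₁ φ₂ e, Ext G₁ x (f1 y f e) φ₁ → Ext G₂ z (f2 P f (φ₁ y)) φ₂ →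
      Ext (dhgoGraph G₁ G₂ x y z P) (Sum.inl x) f (Sum.elim φ₁ (fun b => φ₂ b)) :=
    fun φ₁ φ₂ e h1 h2 =>
      glue_x S f φ₁ _ φ₂ _ h1 (f1_ne f e) h2 (f2_P f _) (fun b _ hb => f2_Q f _ b hb)
  have hy : ∀ φ₁ e, Ext G₁ x (f1 y f e) φ₁ → φ₁ y ≠ e := by
    intro φ₁ e h
    simpa [f1_y] using h.2 y S.hxy
  rcases P_cases S f with ⟨p, p', hp, hp', hne⟩ | ⟨p, hp, hall⟩
  · rcases w with w | w
    · obtain ⟨n, hny, hxn⟩ := g1.deg x y S.hxy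
      obtain ⟨e, he, hec⟩ := exists_ne_color hk (f (Sum.inl n)) c
      obtain ⟨φ₁, h1, h1w⟩ := edge_ne hk S g1 f c e hec hPC (f1_NC S f e n hny hxn he.symm) w
        (by simpa using hw)
      obtain ⟨φ₂, h2⟩ := g2.ext z _ (f2_NC' S f (φ₁ y) p p' hp hp' hne)
      exact ⟨_, fin φ₁ φ₂ e h1 h2, h1w⟩
    · obtain ⟨n, hny, hxn, hfn⟩ := exists_other' hk S g1 f c hPC
      obtain ⟨φ₁, h1⟩ := g1.ext x _ (f1_NC S f c n hny hxn hfn)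
      obtain ⟨φ₂, h2, h2w⟩ := split_ne hk S g2 f c (φ₁ y) (hy _ _ h1) hPC
        (f2_NC' S f (φ₁ y) p p' hp hp' hne) w w.2
      exact ⟨_, fin φ₁ φ₂ c h1 h2, h2w⟩
  · by_cases hac : f (Sum.inr p) = c
    · rw [hac] at hall
      obtain ⟨n, hny, hxn, hfn⟩ := exists_other' hk S g1 f c hPC
      have hN := f1_NC S f c n hny hxn hfn
      rcases w with w | w
      · have hwx : w ≠ x := by simpa using hw
        have hpc : PC k (cut G₁ x (f1 y f c) c) := by
          refine lift1 (x := x) (y := y) hk g2 _ hPC _ (fun a b hab hs => cut_ll f c c a b hab hs)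
            ?_ ?_ S.ne_z
          · intro a b hab
            exact ⟨(adj_rr _ _).2 hab, by simp, by simp⟩
          · intro b hb
            by_cases hbP : (b : V₂) ∈ P
            · left
              exact ⟨(adj_lr _ _).2 (Or.inl ⟨rfl, hbP⟩), fun _ => hall b hbP, by simp⟩
            · right
              refine ⟨(adj_lr _ _).2 (Or.inr ⟨rfl, hb, hbP⟩), ?_, by simp⟩
              intro h
              simp only [Sum.inl.injEq] at h
              exact absurd h S.hxy.ne'
        obtain ⟨φ₁, h1, h1w⟩ := g1.extp x _ w c hwx hN hpc (by
          rintro ⟨b1, b2, b3⟩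
          have hwy : w ≠ y := by
            rintro rfl
            rw [f1_y] at b2
            exact b2 rfl
          apply hbad
          refine ⟨adj_x S w hwy b1, by rwa [f1_ne _ _ _ hwy] at b2, ?_⟩
          rintro (m | m) hm hmw
          · rw [adj_ll] at hm
            have hmy : m ≠ y := by rintro rfl; exact hm.2 rfl
            have := b3 m hm.1 (by simpa using hmw)
            rwa [f1_ne _ _ _ hmy] at this
          · rw [adj_lr] at hm
            rcases hm with hm | hm
            · exact hall m hm.2
            · exact absurd hm.1 S.hxy.ne)
        obtain ⟨φ₂, h2⟩ := g2.ext z _ (f2_NC S f (φ₁ y) p hp (by rw [hac]; exact (hy _ _ h1).symm))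
        exact ⟨_, fin φ₁ φ₂ c h1 h2, h1w⟩
      · obtain ⟨φ₁, h1⟩ := g1.ext x _ hN
        obtain ⟨φ₂, h2, h2w⟩ := split_ne hk S g2 f c (φ₁ y) (hy _ _ h1) hPC
          (f2_NC S f (φ₁ y) p hp (by rw [hac]; exact (hy _ _ h1).symm)) w w.2
        exact ⟨_, fin φ₁ φ₂ c h1 h2, h2w⟩
    · obtain ⟨n, hny, hxn, hfn⟩ := exists_other S f _ hn hall
      have hN := f1_NC S f _ n hny hxn hfn
      rcases w with w | w
      · obtain ⟨φ₁, h1, h1w⟩ := edge_ne hk S g1 f c _ hac hPC hN w (by simpa using hw)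
        obtain ⟨φ₂, h2⟩ := g2.ext z _ (f2_NC S f (φ₁ y) p hp (hy _ _ h1).symm)
        exact ⟨_, fin φ₁ φ₂ _ h1 h2, h1w⟩
      · obtain ⟨φ₁, h1⟩ := g1.ext x _ hN
        obtain ⟨φ₂, h2, h2w⟩ := g2.extFull hk z _ w c w.2
          (f2_NC S f (φ₁ y) p hp (hy _ _ h1).symm) (by
            refine lift2 hk _ y x S.hxy.ne hPC _ ?_ ?_
            · intro a b hab
              exact ⟨(adj_rr _ _).2 hab.1, by simp, by simp⟩
            · intro b hb
              have h3 := hb.2.1 rfl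
              have hbP : (b : V₂) ∉ P := by
                intro h
                rw [f2_P _ _ _ h, hall b h] at h3
                exact hac h3
              refine ⟨(adj_lr _ _).2 (Or.inr ⟨rfl, hb.1, hbP⟩), ?_, by simp⟩
              intro h
              simp only [Sum.inl.injEq] at h
              exact absurd h S.hxy.ne')
        exact ⟨_, fin φ₁ φ₂ _ h1 h2, h2w⟩

theorem extp_l [Fintype V₁] [Fintype V₂] [DecidableEq V₂] (hk : 4 ≤ k)
    (S : Setup G₁ G₂ x y z P) (g1 : Good k G₁) (g2 : Good k G₂)
    (t : V₁) (htx : t ≠ x) (hty : t ≠ y)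
    (f : V₁ ⊕ {w : V₂ // w ≠ z} → Fin (k - 1)) (w : V₁ ⊕ {w : V₂ // w ≠ z})
    (c : Fin (k - 1)) (hw : w ≠ Sum.inl t)
    (hn : NC (dhgoGraph G₁ G₂ x y z P) (Sum.inl t) f)
    (hPC : PC k (cut (dhgoGraph G₁ G₂ x y z P) (Sum.inl t) f c))
    (hbad : ¬ Bad (dhgoGraph G₁ G₂ x y z P) (Sum.inl t) f w c) :
    ∃ φ, Ext (dhgoGraph G₁ G₂ x y z P) (Sum.inl t) f φ ∧ φ w ≠ c := by
  classical
  have hN := NC_l t htx hty f hn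
  have F : ∀ φ₁ : V₁ → Fin (k - 1), ∃ f₂ : V₂ → Fin (k - 1), (∀ b ∈ P, f₂ b = φ₁ x) ∧
      ∀ b, G₂.Adj z b → b ∉ P → f₂ b = φ₁ y := fun φ₁ =>
    ⟨fun b => if b ∈ P then φ₁ x else φ₁ y, fun b hb => by simp [hb], fun b _ hb => by simp [hb]⟩
  rcases w with w | w
  · have hwt : w ≠ t := by simpa using hw
    obtain ⟨φ₁, h1, h1w⟩ := g1.extp t _ w c hwt hN (by
      refine lift1 (x := x) (y := y) hk g2 _ hPC _ ?_ ?_ ?_ S.ne_z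
      · intro a b hab hs
        refine ⟨(adj_ll _ _).2 ⟨hab.1, hs⟩, ?_, ?_⟩
        · intro h
          exact hab.2.1 (by simpa using h)
        · intro h
          exact hab.2.2 (by simpa using h)
      · intro a b hab
        exact ⟨(adj_rr _ _).2 hab, by simp, by simp⟩
      · intro b hb
        by_cases hbP : (b : V₂) ∈ P
        · left
          refine ⟨(adj_lr _ _).2 (Or.inl ⟨rfl, hbP⟩), ?_, by simp⟩
          intro h
          exact absurd (by simpa using h) htx.symm
        · right
          refine ⟨(adj_lr _ _).2 (Or.inr ⟨rfl, hb, hbP⟩), ?_, by simp⟩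
          intro h
          exact absurd (by simpa using h) hty.symm) (by
      rintro ⟨b1, b2, b3⟩
      apply hbad
      refine ⟨(adj_ll _ _).2 ⟨b1, ?_⟩, b2, ?_⟩
      · intro h
        rcases Sym2.eq_iff.1 h with ⟨h, -⟩ | ⟨h, -⟩
        · exact htx h
        · exact hty h
      · rintro (m | m) hm hmw
        · rw [adj_ll] at hm
          exact b3 m hm.1 (by simpa using hmw)
        · rw [adj_lr] at hm
          tauto)
    have hne : φ₁ x ≠ φ₁ y := h1.1 x y htx.symm hty.symm S.hxy
    obtain ⟨f₂, hfP, hfQ⟩ := F φ₁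
    obtain ⟨φ₂, h2⟩ := g2.ext z f₂ (NC_two S _ _ hne f₂ hfP hfQ)
    exact ⟨_, glue_l S t htx hty f φ₁ φ₂ f₂ h1 h2 hfP hfQ, h1w⟩
  · obtain ⟨φ₁, h1⟩ := g1.ext t _ hN
    have hne : φ₁ x ≠ φ₁ y := h1.1 x y htx.symm hty.symm S.hxy
    obtain ⟨f₂, hfP, hfQ⟩ := F φ₁
    have hrr : ∀ a b : {w : V₂ // w ≠ z}, (cut G₂ z f₂ c).Adj a b →
        (cut (dhgoGraph G₁ G₂ x y z P) (Sum.inl t) f c).Adj (Sum.inr a) (Sum.inr b) :=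
      fun a b hab => ⟨(adj_rr _ _).2 hab.1, by simp, by simp⟩
    obtain ⟨φ₂, h2, h2w⟩ := g2.extFull hk z f₂ w c w.2 (NC_two S _ _ hne f₂ hfP hfQ) (by
      by_cases hc : φ₁ y = c
      · refine lift2 hk _ y x S.hxy.ne hPC _ hrr ?_
        intro b hb
        have h3 := hb.2.1 rfl
        have hbP : (b : V₂) ∉ P := by
          intro h
          rw [hfP _ h] at h3
          exact hne (h3.trans hc.symm)
        refine ⟨(adj_lr _ _).2 (Or.inr ⟨rfl, hb.1, hbP⟩), ?_, by simp⟩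
        intro h
        exact absurd (by simpa using h) hty.symm
      · refine lift2 hk _ x y S.hxy.ne' hPC _ hrr ?_
        intro b hb
        have h3 := hb.2.1 rfl
        have hbP : (b : V₂) ∈ P := by
          by_contra h
          rw [hfQ _ hb.1 h] at h3
          exact hc h3
        refine ⟨(adj_lr _ _).2 (Or.inl ⟨rfl, hbP⟩), ?_, by simp⟩
        intro h
        exact absurd (by simpa using h) htx.symm)
    exact ⟨_, glue_l S t htx hty f φ₁ φ₂ f₂ h1 h2 hfP hfQ, h2w⟩

theorem good_dhgo [Fintype V₁] [Fintype V₂] [DecidableEq V₂] (hk : 4 ≤ k)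
    (S : Setup G₁ G₂ x y z P) (g1 : Good k G₁) (g2 : Good k G₂) :
    Good k (dhgoGraph G₁ G₂ x y z P) where
  nc := nc_dhgo S g1 g2
  deg := deg_dhgo S g1 g2
  pot := pot_dhgo hk S g1 g2
  ext := by
    rintro (t | t) f hn
    · by_cases htx : t = x
      · subst htx
        exact ext_x hk S g1 g2 f hn
      · by_cases hty : t = y
        · subst hty
          rw [← dhgo_swap S.hP] at hn ⊢
          exact ext_x hk S.swap g1 g2 f hn
        · exact ext_l S g1 g2 t htx hty f hn
    · exact ext_r hk S g1 g2 t f hn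
  extp := by
    rintro (t | t) f w c hw hn hPC hbad
    · by_cases htx : t = x
      · subst htx
        exact extp_x hk S g1 g2 f w c hw hn hPC hbad
      · by_cases hty : t = y
        · subst hty
          rw [← dhgo_swap S.hP] at hn hPC hbad ⊢
          exact extp_x hk S.swap g1 g2 f w c hw hn hPC hbad
        · exact extp_l hk S g1 g2 t htx hty f w c hw hn hPC hbad
    · exfalso
      refine noA hk g1 S.hxy _ hPC ?_ S.ne_z
      intro a b hab hs
      exact ⟨(adj_ll _ _).2 ⟨hab, hs⟩, by simp, by simp⟩

end Dhgo2

theorem Good.iso {V W : Type*} [Fintype V] [Fintype W] {k : ℕ} (hk : 4 ≤ k) {G : SimpleGraph V}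
    {H : SimpleGraph W} (i : G ≃g H) (hH : Good k H) : Good k G := by
  classical
  have hNC : ∀ (t : V) (f : V → Fin (k - 1)), NC G t f → NC H (i t) (f ∘ i.symm) := by
    rintro t f ⟨a, b, ha, hb, hab⟩
    exact ⟨i a, i b, i.map_adj_iff.2 ha, i.map_adj_iff.2 hb, by simpa using hab⟩
  have hExt : ∀ (t : V) (f : V → Fin (k - 1)) φ, Ext H (i t) (f ∘ i.symm) φ →
      Ext G t f (φ ∘ i) := by
    rintro t f φ ⟨h1, h2⟩
    refine ⟨fun a b ha hb hab => h1 _ _ (by simpa using ha) (by simpa using hb)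
      (i.map_adj_iff.2 hab), fun n hn => ?_⟩
    simpa using h2 (i n) (i.map_adj_iff.2 hn)
  refine ⟨?_, ?_, ?_, ?_, ?_⟩
  · rintro ⟨φ, h⟩
    exact hH.nc ⟨φ ∘ i.symm, fun a b hab => h _ _ (i.symm.map_adj_iff.2 hab)⟩
  · intro a b hab
    obtain ⟨n, hn, han⟩ := hH.deg (i a) (i b) (i.map_adj_iff.2 hab)
    refine ⟨i.symm n, ?_, ?_⟩
    · rintro rfl
      simp at hn
    · rw [← i.map_adj_iff]
      simpa using han
  · intro t f hn
    obtain ⟨φ, h⟩ := hH.ext (i t) _ (hNC t f hn)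
    exact ⟨_, hExt t f φ h⟩
  · refine le_trans ?_ hH.pot
    have := rho_mono hk H G Finset.univ i.symm i.symm.injective.injOn
      (fun a _ b _ hab => i.symm.map_adj_iff.2 hab)
    rwa [Finset.image_univ_of_surjective i.symm.surjective] at this
  · intro t f w c hw hn hPC hbad
    obtain ⟨φ, h, hφ⟩ := hH.extp (i t) (f ∘ i.symm) (i w) c (by simpa using hw) (hNC t f hn) (by
      intro R hR hR'
      refine lt_of_lt_of_le (hPC (R.image i.symm) ?_ ?_)
        (rho_mono hk _ _ R i.symm i.symm.injective.injOn ?_)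
      · rwa [Finset.card_image_of_injective _ i.symm.injective]
      · intro h
        apply hR'
        ext a
        have : i.symm a ∈ R.image i.symm := by rw [h]; simp
        simpa using this
      · intro a _ b _ hab
        refine ⟨i.symm.map_adj_iff.2 hab.1, fun h => ?_, fun h => ?_⟩
        · exact hab.2.1 (by rw [← h]; simp)
        · exact hab.2.2 (by rw [← h]; simp)) (by
      rintro ⟨b1, b2, b3⟩
      refine hbad ⟨i.map_adj_iff.1 b1, by simpa using b2, fun n hn hnw => ?_⟩
      simpa using b3 (i n) (i.map_adj_iff.2 hn) (by simpa using hnw))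
    exact ⟨_, hExt t f φ h, by simpa using hφ⟩

/-- Hall step in the complete graph -/
theorem hall_top {k : ℕ} (hk : 4 ≤ k) (t : Fin k) (f : Fin k → Fin (k - 1)) (w : Fin k)
    (L : Fin k → Finset (Fin (k - 1)))
    (hL1 : ∀ a, a ≠ w → L a = {f a}ᶜ) (hL2 : k - 3 ≤ (L w).card)
    (hall : ∀ c, ∃ a, a ≠ t ∧ c ∈ L a) :
    ∃ φ : Fin k → Fin (k - 1), (∀ a b, a ≠ t → b ≠ t → a ≠ b → φ a ≠ φ b) ∧
      ∀ a, a ≠ t → φ a ∈ L a := by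
  classical
  have H : ∀ s : Finset {a : Fin k // a ≠ t}, s.card ≤ (s.biUnion fun a => L a).card := by
    intro s
    have hs : s.card ≤ k - 1 := by
      have := Finset.card_le_univ s
      simpa using this
    by_cases hf : s.card = k - 1
    · have hsu : s = Finset.univ := by
        rw [← Finset.card_eq_iff_eq_univ]
        simpa using hf
      have : (s.biUnion fun a => L a) = Finset.univ := by
        ext c
        obtain ⟨a, hat, hc⟩ := hall c
        simp only [Finset.mem_biUnion, Finset.mem_univ, iff_true]
        exact ⟨⟨a, hat⟩, by simp [hsu], hc⟩
      rw [this]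
      simpa using hs
    · by_cases hw : ∃ a ∈ s, (a : Fin k) ≠ w
      · obtain ⟨a, ha, haw⟩ := hw
        have h1 := Finset.card_le_card (Finset.subset_biUnion_of_mem (fun a : {a : Fin k // a ≠ t} => L a) ha)
        have h2 : (L a).card = k - 2 := by
          rw [hL1 _ haw, Finset.card_compl]
          simp
          omega
        omega
      · push Not at hw
        rcases s.eq_empty_or_nonempty with rfl | ⟨a, ha⟩
        · simp
        · have h0 : s.card ≤ 1 := by
            rw [Finset.card_le_one]
            intro p hp q hq
            exact Subtype.ext ((hw p hp).trans (hw q hq).symm)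
          have h1 := Finset.card_le_card (Finset.subset_biUnion_of_mem (fun a : {a : Fin k // a ≠ t} => L a) ha)
          rw [hw a ha] at h1
          omega
  obtain ⟨g, hg1, hg2⟩ := (Finset.all_card_le_biUnion_card_iff_exists_injective _).1 H
  refine ⟨fun a => if h : a = t then ⟨0, by omega⟩ else g ⟨a, h⟩, ?_, ?_⟩
  · intro a b ha hb hab
    simp only [ha, hb, dite_false]
    intro h
    exact hab (by simpa using hg1 h)
  · intro a ha
    simpa [ha] using hg2 ⟨a, ha⟩

theorem good_top {k : ℕ} (hk : 4 ≤ k) : Good k (⊤ : SimpleGraph (Fin k)) := by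
  classical
  refine ⟨?_, ?_, ?_, ?_, ?_⟩
  · rintro ⟨φ, h⟩
    have : Function.Injective φ := by
      intro a b hab
      by_contra hne
      exact h a b (by simpa using hne) hab
    have := Fintype.card_le_of_injective φ this
    simp at this
    omega
  · intro a b _
    have : ∃ n, n ∉ ({a, b} : Finset (Fin k)) := by
      by_contra! h
      have h1 : (Finset.univ : Finset (Fin k)) ⊆ {a, b} := fun n _ => h n
      have h1 := Finset.card_le_card h1
      have h2 := Finset.card_le_two (a := a) (b := b)
      simp at h1
      omega
    obtain ⟨n, hn⟩ := this
    simp only [Finset.mem_insert, Finset.mem_singleton, not_or] at hn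
    exact ⟨n, hn.2, by simpa using Ne.symm hn.1⟩
  · rintro t f ⟨a, b, ha, hb, hab⟩
    obtain ⟨φ, h1, h2⟩ := hall_top hk t f t (fun a => {f a}ᶜ) (fun _ _ => rfl)
      (by rw [Finset.card_compl]; simp; omega) (by
        intro c
        by_cases hc : c = f a
        · exact ⟨b, by simpa using Ne.symm hb, by simpa [hc] using hab⟩
        · exact ⟨a, by simpa using Ne.symm ha, by simpa using hc⟩)
    refine ⟨φ, fun a b ha hb hab => h1 a b ha hb (by simpa using hab), fun n hn => ?_⟩
    simpa using h2 n (by simpa using Ne.symm hn)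
  · have : pr (⊤ : SimpleGraph (Fin k)) Finset.univ = k * k - k := by
      unfold pr
      have h := Finset.offDiag_card (Finset.univ : Finset (Fin k))
      simp only [Finset.card_univ, Fintype.card_fin] at h
      rw [← h]
      congr 1
      ext p
      simp
    unfold rho
    rw [this]
    have hkk : k ≤ k * k := Nat.le_mul_self k
    push_cast [hkk]
    simp only [Finset.card_univ, Fintype.card_fin]
    nlinarith
  · rintro t f w c hwt ⟨a, b, ha, hb, hab⟩ - hbad
    simp only [SimpleGraph.top_adj] at ha hb
    obtain ⟨φ, h1, h2⟩ := hall_top hk t f w (fun a => if a = w then {f a, c}ᶜ else {f a}ᶜ)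
      (fun a ha => by simp [ha])
      (by
        simp only [if_true]
        rw [Finset.card_compl]
        have := Finset.card_le_two (a := f w) (b := c)
        simp only [Fintype.card_fin]
        omega) (by
        intro d
        by_contra! hd
        have hd1 : ∀ n, n ≠ t → n ≠ w → f n = d := by
          intro n hn hnw
          have := hd n hn
          simpa [hnw, eq_comm] using this
        have hd2 : d = f w ∨ d = c := by
          have := hd w hwt
          simp only [if_true, Finset.mem_compl, Finset.mem_insert, Finset.mem_singleton,
            not_not] at this
          exact this
        have hfw : f w ≠ d := by
          intro h
          apply hab
          have : ∀ n, n ≠ t → f n = d := fun n hn => by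
            by_cases hnw : n = w
            · rw [hnw, h]
            · exact hd1 n hn hnw
          rw [this a ha.symm, this b hb.symm]
        have hdc : d = c := hd2.resolve_left (fun h => hfw h.symm)
        subst hdc
        exact hbad ⟨by simpa using hwt.symm, hfw, fun n hn hnw =>
          hd1 n (by simpa using Ne.symm hn) hnw⟩)
    refine ⟨φ, ⟨fun a b ha hb hab => h1 a b ha hb (by simpa using hab), fun n hn => ?_⟩, ?_⟩
    · have := h2 n (by simpa using Ne.symm hn)
      by_cases hnw : n = w
      · subst hnw
        simp only [if_true, Finset.mem_compl, Finset.mem_insert, Finset.mem_singleton,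
            not_or] at this
        exact this.1
      · simpa [hnw] using this
    · have := h2 w hwt
      simp only [if_true, Finset.mem_compl, Finset.mem_insert, Finset.mem_singleton,
            not_or] at this
      exact this.2

theorem good_fin {k : ℕ} (hk : 4 ≤ k) {n : ℕ} {G : SimpleGraph (Fin n)} (h : IsOreFin k G) :
    Good k G := by
  induction h with
  | complete h => exact Good.iso hk h.some (good_top hk)
  | comp _ _ h g1 g2 =>
    obtain ⟨x, y, z, P, hxy, hP, hp, hq, ⟨i⟩⟩ := h
    refine Good.iso hk i (good_dhgo hk ⟨hxy, fun b hb => hP hb, hp, ?_⟩ g1 g2)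
    obtain ⟨q, hq⟩ := hq
    exact ⟨q, hq.1, hq.2⟩

theorem good_ore {V : Type*} [Fintype V] {k : ℕ} (hk : 4 ≤ k) {G : SimpleGraph V}
    (h : IsKOre k G) : Good k G := by
  obtain ⟨n, H, hH, ⟨i⟩⟩ := h
  exact Good.iso hk i (good_fin hk hH)

end OreAux

/-- **Lemma.** Let `k ≥ 4`, let `G` be a `k`-Ore graph, and let `uv` be an edge of `G` such
that `ρ_{k,G-uv}(W) > (k+1)(k-2)` for every `W ⊆ V(G)` with `2 ≤ |W| ≤ |V(G)|-1`. Then for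
each `w ∈ V(G) - {u,v}` there is a proper `(k-1)`-coloring `φ` of `G - uv` with
`φ(w) ≠ φ(u) = φ(v)`. -/
theorem kOre_coloring_of_deleteEdge {V : Type*} [Fintype V] [DecidableEq V] (k : ℕ)
    (hk : 4 ≤ k) (G : SimpleGraph V) [DecidableRel G.Adj] (hG : IsKOre k G)
    (u v : V) (huv : G.Adj u v)
    (hpot : ∀ W : Finset V, 2 ≤ W.card → W.card ≤ Fintype.card V - 1 →
      ((k : ℤ) + 1) * ((k : ℤ) - 2) < potential k (G.deleteEdges {s(u, v)}) W)
    (w : V) (hwu : w ≠ u) (hwv : w ≠ v) :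
    ∃ C : (G.deleteEdges {s(u, v)}).Coloring (Fin (k - 1)), C w ≠ C u ∧ C u = C v := by
  classical
  have g := OreAux.good_ore hk hG
  have h0 : 0 < k - 1 := by omega
  obtain ⟨c', hc', -⟩ := OreAux.exists_ne_color hk ⟨0, h0⟩ ⟨0, h0⟩
  generalize (⟨0, h0⟩ : Fin (k - 1)) = c at hc'
  obtain ⟨n, hn, hun⟩ := g.deg u v huv
  obtain ⟨φ, ⟨h1, h2⟩, hw⟩ := g.extp u (fun m => if m = v then c' else c) w c hwu
    ⟨n, v, hun, huv, by simpa [hn] using hc'.symm⟩ (by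
      intro R hR hR'
      have hlt := Finset.card_lt_univ_of_notMem (s := R) (x := Classical.choose
        (by simpa [Finset.eq_univ_iff_forall] using hR' : ∃ a, a ∉ R)) (Classical.choose_spec
        (by simpa [Finset.eq_univ_iff_forall] using hR' : ∃ a, a ∉ R))
      have h := hpot R hR (by omega)
      rw [OreAux.potential_eq] at h
      refine lt_of_lt_of_le h (OreAux.rho_mono_id hk _ _ R ?_)
      rintro a - b - ⟨hab, ha, hb⟩
      rw [SimpleGraph.deleteEdges_adj]
      refine ⟨hab, ?_⟩
      intro hs
      rcases Sym2.eq_iff.1 (Set.mem_singleton_iff.1 hs) with ⟨rfl, rfl⟩ | ⟨rfl, rfl⟩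
      · exact hc' (by simpa using ha rfl)
      · exact hc' (by simpa using hb rfl)) (by
      rintro ⟨-, h, -⟩
      simp [hwv] at h)
  have key : ∀ b, G.Adj u b → b ≠ v → φ b ≠ c := by
    intro b hb hbv
    simpa [hbv] using h2 b hb
  have hcol : ∀ a b, G.Adj a b → s(a, b) ≠ s(u, v) →
      Function.update φ u c a ≠ Function.update φ u c b := by
    intro a b hab hs
    by_cases ha : a = u
    · subst ha
      have : b ≠ v := by rintro rfl; exact hs rfl
      simpa [hab.ne'] using (key b hab this).symm
    · by_cases hb : b = u
      · subst hb
        have : a ≠ v := by rintro rfl; exact hs Sym2.eq_swap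
        simpa [ha] using key a hab.symm this
      · simpa [ha, hb] using h1 a b ha hb hab
  refine ⟨SimpleGraph.Coloring.mk (Function.update φ u c) ?_, ?_, ?_⟩
  · intro a b hab
    rw [SimpleGraph.deleteEdges_adj] at hab
    exact hcol a b hab.1 (by simpa using hab.2)
  · change Function.update φ u c w ≠ Function.update φ u c u
    simpa [hwu] using hw
  · change Function.update φ u c u = Function.update φ u c v
    by_contra hne
    apply g.nc
    refine ⟨Function.update φ u c, fun a b hab => ?_⟩
    by_cases hs : s(a, b) = s(u, v)
    · rcases Sym2.eq_iff.1 hs with ⟨rfl, rfl⟩ | ⟨rfl, rfl⟩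
      · exact hne
      · exact Ne.symm hne
    · exact hcol a b hab hs
end

section
/- Let k ≥ 4, let G be a k-Ore graph, and let u ∈ V(G) be such that ρ_{k,G}(W) > (k+1)(k−2) for every W ⊆ V(G) − u with |W| ≥ 2. Then G contains a set S of k−1 vertices such that G[S] is a complete graph, every vertex of S has degree exactly k−1 in G, and the set N(S) − S of outside neighbors of S is an independent set in G. -/
open SimpleGraph

open Classical in
/-- Number of ordered adjacent pairs inside `R`. -/
noncomputable def adjCount {V : Type*} (G : SimpleGraph V) (R : Finset V) : ℤ :=
  ∑ a ∈ R, ∑ b ∈ R, if G.Adj a b then 1 else 0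

open Classical in
/-- Degree as an integer sum. -/
noncomputable def degZ {V : Type*} [Fintype V] (G : SimpleGraph V) (v : V) : ℤ :=
  ∑ b, if G.Adj v b then 1 else 0

/-- Potential through ordered pairs. -/
noncomputable def potZ {V : Type*} (k : ℕ) (G : SimpleGraph V) (R : Finset V) : ℤ :=
  ((k : ℤ) + 1) * ((k : ℤ) - 2) * R.card - ((k : ℤ) - 1) * adjCount G R

/-- The induction predicate. -/
def GoodOre {V : Type*} [Fintype V] (k : ℕ) (G : SimpleGraph V) : Prop :=
  potZ k G Finset.univ = (k : ℤ) * ((k : ℤ) - 3) ∧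
  ∀ u : V, (∀ W : Finset V, u ∉ W → 2 ≤ W.card → ((k : ℤ) + 1) * ((k : ℤ) - 2) < potZ k G W) →
    ∃ S : Finset V, u ∉ S ∧ S.card = k - 1 ∧ G.IsClique (S : Set V) ∧
      (∀ v ∈ S, degZ G v = (k : ℤ) - 1) ∧
      ∀ a b : V, a ∉ S → b ∉ S → (∃ a' ∈ S, G.Adj a' a) → (∃ b' ∈ S, G.Adj b' b) →
        ¬G.Adj a b

theorem potential_eq_potZ {V : Type*} [Fintype V] [DecidableEq V] (k : ℕ) (G : SimpleGraph V)
    [DecidableRel G.Adj] (R : Finset V) : potential k G R = potZ k G R := by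
  classical
  have h := (G.induce (R : Set V)).sum_degrees_eq_twice_card_edges
  have h2 : adjCount G R = 2 * ((G.induce (R : Set V)).edgeFinset.card : ℤ) := by
    have h3 : ((∑ v, (G.induce (R : Set V)).degree v : ℕ) : ℤ)
        = 2 * ((G.induce (R : Set V)).edgeFinset.card : ℤ) := by
      rw [h]; push_cast; rfl
    rw [← h3]
    unfold adjCount
    rw [← Finset.sum_coe_sort R]
    push_cast
    refine Finset.sum_congr rfl fun a _ => ?_
    rw [← Finset.sum_coe_sort R, ← SimpleGraph.card_neighborFinset_eq_degree,
      SimpleGraph.neighborFinset_eq_filter, Finset.card_filter]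
    push_cast
    refine Finset.sum_congr rfl fun b _ => ?_
    simp
  unfold potential potZ
  rw [h2]; ring

theorem adjCount_map {V U : Type*} {G : SimpleGraph V} {H : SimpleGraph U} (e : G ↪g H)
    (R : Finset V) : adjCount H (R.map e.toEmbedding) = adjCount G R := by
  unfold adjCount
  rw [Finset.sum_map]
  refine Finset.sum_congr rfl fun a _ => ?_
  rw [Finset.sum_map]
  refine Finset.sum_congr rfl fun b _ => ?_
  classical exact if_congr e.map_adj_iff rfl rfl

theorem potZ_map {V U : Type*} {G : SimpleGraph V} {H : SimpleGraph U} (k : ℕ) (e : G ↪g H)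
    (R : Finset V) : potZ k H (R.map e.toEmbedding) = potZ k G R := by
  unfold potZ
  rw [adjCount_map, Finset.card_map]

theorem degZ_iso {V U : Type*} [Fintype V] [Fintype U] {G : SimpleGraph V} {H : SimpleGraph U}
    (e : G ≃g H) (v : V) : degZ H (e v) = degZ G v := by
  unfold degZ
  rw [← e.toEquiv.sum_comp]
  refine Finset.sum_congr rfl fun b _ => ?_
  classical exact if_congr e.map_adj_iff rfl rfl

theorem GoodOre.iso {V U : Type*} [Fintype V] [Fintype U] {k : ℕ} {G : SimpleGraph V}
    {H : SimpleGraph U} (hH : GoodOre k H) (e : G ≃g H) : GoodOre k G := by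
  obtain ⟨h1, h2⟩ := hH
  refine ⟨?_, ?_⟩
  · rw [← h1, ← potZ_map k (e : G ↪g H)]
    congr 1
    ext x
    simp only [Finset.mem_map, Finset.mem_univ, true_and, iff_true]
    exact ⟨e.symm x, e.apply_symm_apply x⟩
  · intro u hu
    obtain ⟨S, hS1, hS2, hS3, hS4, hS5⟩ := h2 (e u) (by
      intro W hW hc
      rw [← potZ_map k (e.symm : H ↪g G)]
      apply hu
      · intro hm
        obtain ⟨w, hw, hwe⟩ := Finset.mem_map.1 hm
        have : e.symm w = u := hwe
        rw [← this, e.apply_symm_apply] at hW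
        exact hW hw
      · rwa [Finset.card_map])
    have hmem : ∀ v, v ∈ S.map (e.symm : H ↪g G).toEmbedding ↔ e v ∈ S := by
      intro v
      rw [Finset.mem_map]
      constructor
      · rintro ⟨w, hw, rfl⟩
        change e (e.symm w) ∈ S
        rwa [e.apply_symm_apply]
      · intro h
        exact ⟨e v, h, e.symm_apply_apply v⟩
    refine ⟨S.map (e.symm : H ↪g G).toEmbedding, ?_, ?_, ?_, ?_, ?_⟩
    · rwa [hmem]
    · rwa [Finset.card_map]
    · intro a ha b hb hab
      rw [Finset.mem_coe, hmem] at ha hb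
      exact e.map_adj_iff.1 (hS3 ha hb (fun h => hab (e.injective h)))
    · intro v hv
      rw [hmem] at hv
      rw [← degZ_iso e]
      exact hS4 _ hv
    · rintro a b ha hb ⟨a', ha', haa⟩ ⟨b', hb', hbb⟩ hab
      rw [hmem] at ha hb ha' hb'
      exact hS5 _ _ ha hb ⟨_, ha', e.map_adj_iff.2 haa⟩ ⟨_, hb', e.map_adj_iff.2 hbb⟩
        (e.map_adj_iff.2 hab)

theorem degZ_top (k : ℕ) (v : Fin k) : degZ (⊤ : SimpleGraph (Fin k)) v = (k : ℤ) - 1 := by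
  classical
  unfold degZ
  have : ∑ b : Fin k, ((1 : ℤ) - if v = b then 1 else 0) = (k : ℤ) - 1 := by
    rw [Finset.sum_sub_distrib]
    simp
  rw [← this]
  refine Finset.sum_congr rfl fun b _ => ?_
  by_cases h : v = b <;> simp [h]

theorem goodOre_top (k : ℕ) : GoodOre k (⊤ : SimpleGraph (Fin k)) := by
  classical
  refine ⟨?_, ?_⟩
  · have : adjCount (⊤ : SimpleGraph (Fin k)) Finset.univ = k * ((k : ℤ) - 1) := by
      have h : adjCount (⊤ : SimpleGraph (Fin k)) Finset.univ
        = ∑ v, degZ (⊤ : SimpleGraph (Fin k)) v := rfl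
      rw [h]
      simp_rw [degZ_top]
      simp
      ring
    unfold potZ
    rw [this]
    simp only [Finset.card_univ, Fintype.card_fin]
    ring
  · intro u _
    refine ⟨Finset.univ.erase u, by simp, by simp, ?_, ?_, ?_⟩
    · intro a _ b _ h
      exact h
    · intro v _
      exact degZ_top k v
    · intro a b ha hb _ _ hab
      simp at ha hb
      subst ha; subst hb
      exact hab.ne rfl

section dhgo
variable {V₁ V₂ : Type*} {G₁ : SimpleGraph V₁} {G₂ : SimpleGraph V₂} {x y : V₁} {z : V₂}
  {P : Set V₂}

theorem dhgo_ll (a b : V₁) : (dhgoGraph G₁ G₂ x y z P).Adj (Sum.inl a) (Sum.inl b) ↔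
    G₁.Adj a b ∧ s(a, b) ≠ s(x, y) := by
  simp only [dhgoGraph, SimpleGraph.fromRel_adj]
  constructor
  · rintro ⟨_, h | h⟩
    · exact h
    · exact ⟨h.1.symm, by rw [Sym2.eq_swap]; exact h.2⟩
  · intro h
    exact ⟨fun e => h.1.ne (Sum.inl.inj e), Or.inl h⟩

theorem dhgo_lr (a : V₁) (b : {w : V₂ // w ≠ z}) :
    (dhgoGraph G₁ G₂ x y z P).Adj (Sum.inl a) (Sum.inr b) ↔
    (a = x ∧ (b : V₂) ∈ P) ∨ (a = y ∧ (b : V₂) ∈ G₂.neighborSet z \ P) := by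
  simp [dhgoGraph, SimpleGraph.fromRel_adj]

theorem dhgo_rl (a : V₁) (b : {w : V₂ // w ≠ z}) :
    (dhgoGraph G₁ G₂ x y z P).Adj (Sum.inr b) (Sum.inl a) ↔
    (a = x ∧ (b : V₂) ∈ P) ∨ (a = y ∧ (b : V₂) ∈ G₂.neighborSet z \ P) := by
  rw [SimpleGraph.adj_comm, dhgo_lr]

theorem dhgo_rr (a b : {w : V₂ // w ≠ z}) :
    (dhgoGraph G₁ G₂ x y z P).Adj (Sum.inr a) (Sum.inr b) ↔ G₂.Adj a b := by
  simp only [dhgoGraph, SimpleGraph.fromRel_adj]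
  constructor
  · rintro ⟨_, h | h⟩
    · exact h
    · exact h.symm
  · intro h
    exact ⟨fun e => h.ne (congrArg Subtype.val (Sum.inr.inj e)), Or.inl h⟩

open Classical in
theorem sum_ne_subtype [Fintype V₂] (z : V₂) (f : V₂ → ℤ) :
    ∑ b : {w : V₂ // w ≠ z}, f b = ∑ b, f b - f z := by
  have h := Fintype.sum_eq_add_sum_subtype_ne f z
  linarith

open Classical in
theorem sum_cross [Fintype V₁] (_hxy : x ≠ y) (hP : P ⊆ G₂.neighborSet z)
    (b : V₂) :
    (∑ a : V₁, if (a = x ∧ b ∈ P) ∨ (a = y ∧ b ∈ G₂.neighborSet z \ P) then (1 : ℤ) else 0)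
      = if G₂.Adj b z then 1 else 0 := by
  by_cases hb : b ∈ P
  · have : G₂.Adj b z := (hP hb).symm
    simp [hb, this]
  · by_cases hz : G₂.Adj b z
    · simp [hb, hz, hz.symm]
    · have hz' : ¬ G₂.Adj z b := fun h => hz h.symm
      simp [hb, hz, hz']

theorem dhgo_degZ [Fintype V₁] [Fintype V₂] [Fintype {w : V₂ // w ≠ z}] (hxy : x ≠ y)
    (hP : P ⊆ G₂.neighborSet z)
    (v : {w : V₂ // w ≠ z}) : degZ (dhgoGraph G₁ G₂ x y z P) (Sum.inr v) = degZ G₂ v := by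
  classical
  unfold degZ
  rw [Fintype.sum_sum_type]
  simp_rw [dhgo_rl, dhgo_rr]
  rw [sum_cross hxy hP]
  have := sum_ne_subtype z (fun b => if G₂.Adj v b then (1 : ℤ) else 0)
  have e : ∑ b : {w : V₂ // w ≠ z}, (if G₂.Adj v b then (1 : ℤ) else 0) =
    ∑ b, (if G₂.Adj v b then (1 : ℤ) else 0) - (if G₂.Adj v z then (1 : ℤ) else 0) := by
    rw [← this]
    refine Finset.sum_congr ?_ fun _ _ => rfl
    ext; simp
  rw [e]; ring

theorem adjCount_univ {V : Type*} [Fintype V] (G : SimpleGraph V) :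
    adjCount G Finset.univ = ∑ v, degZ G v := rfl

theorem dhgo_adjCount_left [Fintype V₁] (hxy : G₁.Adj x y) :
    adjCount (dhgoGraph G₁ G₂ x y z P) (Finset.univ.map Function.Embedding.inl)
      = adjCount G₁ Finset.univ - 2 := by
  classical
  unfold adjCount
  simp only [Finset.sum_map, Function.Embedding.inl_apply, dhgo_ll]
  have : ∀ a b : V₁, (if G₁.Adj a b ∧ s(a, b) ≠ s(x, y) then (1 : ℤ) else 0)
      = (if G₁.Adj a b then 1 else 0) - (if a = x then if b = y then 1 else 0 else 0)
        - (if a = y then if b = x then 1 else 0 else 0) := by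
    intro a b
    have hne := hxy.ne
    by_cases h1 : a = x
    · subst h1
      by_cases h2 : b = y
      · subst h2; simp [hxy, hne]
      · simp [h2, hne]
    · by_cases h3 : a = y
      · subst h3
        by_cases h2 : b = x
        · subst h2; simp [hxy.symm, hne.symm]
        · simp [h2, h1]
      · simp [h1, h3]
  simp_rw [this, Finset.sum_sub_distrib]
  simp
  ring

theorem dhgo_adjCount [Fintype V₁] [Fintype V₂] [Fintype {w : V₂ // w ≠ z}] (hxy : G₁.Adj x y)
    (hP : P ⊆ G₂.neighborSet z) :
    adjCount (dhgoGraph G₁ G₂ x y z P) Finset.univ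
      = adjCount G₁ Finset.univ - 2 + adjCount G₂ Finset.univ := by
  classical
  have hl := dhgo_adjCount_left (G₂ := G₂) (z := z) (P := P) hxy
  unfold adjCount at hl
  simp only [Finset.sum_map, Function.Embedding.inl_apply] at hl
  rw [adjCount_univ, Fintype.sum_sum_type]
  simp_rw [dhgo_degZ hxy.ne hP]
  have e1 : ∑ b : {w : V₂ // w ≠ z}, degZ G₂ b = ∑ b, degZ G₂ b - degZ G₂ z := by
    rw [← sum_ne_subtype]
    refine Finset.sum_congr ?_ fun _ _ => rfl
    ext; simp
  rw [e1]
  have e2 : ∀ a : V₁, degZ (dhgoGraph G₁ G₂ x y z P) (Sum.inl a) =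
      (∑ b : V₁, if (dhgoGraph G₁ G₂ x y z P).Adj (Sum.inl a) (Sum.inl b) then (1 : ℤ) else 0)
      + ∑ b : {w : V₂ // w ≠ z},
        if (dhgoGraph G₁ G₂ x y z P).Adj (Sum.inl a) (Sum.inr b) then (1 : ℤ) else 0 := by
    intro a
    unfold degZ
    rw [Fintype.sum_sum_type]
  simp_rw [e2, Finset.sum_add_distrib]
  rw [hl]
  have e3 : ∀ b : {w : V₂ // w ≠ z}, (∑ a : V₁,
      if (dhgoGraph G₁ G₂ x y z P).Adj (Sum.inl a) (Sum.inr b) then (1 : ℤ) else 0)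
      = if G₂.Adj b z then 1 else 0 := by
    intro b
    rw [← sum_cross hxy.ne hP]
    exact Finset.sum_congr rfl fun a _ => if_congr (dhgo_lr a b) rfl rfl
  have e5 : (∑ a : V₁, ∑ b : {w : V₂ // w ≠ z},
      if (dhgoGraph G₁ G₂ x y z P).Adj (Sum.inl a) (Sum.inr b) then (1 : ℤ) else 0)
      = ∑ b : {w : V₂ // w ≠ z}, if G₂.Adj b z then (1 : ℤ) else 0 := by
    rw [Finset.sum_comm]
    exact Finset.sum_congr rfl fun b _ => e3 b
  rw [e5]
  have e4 : ∑ b : {w : V₂ // w ≠ z}, (if G₂.Adj b z then (1 : ℤ) else 0) = degZ G₂ z := by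
    have h := sum_ne_subtype z (fun b => if G₂.Adj b z then (1 : ℤ) else 0)
    simp only [SimpleGraph.irrefl, if_false, sub_zero] at h
    unfold degZ
    have h' : ∑ b, (if G₂.Adj z b then (1 : ℤ) else 0) = ∑ b, if G₂.Adj b z then (1 : ℤ) else 0 :=
      Finset.sum_congr rfl fun b _ => if_congr (G₂.adj_comm z b) rfl rfl
    rw [h', ← h]
    refine Finset.sum_congr ?_ fun _ _ => rfl
    ext; simp
  rw [e4]
  unfold adjCount degZ
  ring

theorem goodOre_dhgo [Fintype V₁] [Fintype V₂] [Fintype {w : V₂ // w ≠ z}] {k : ℕ}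
    (h₁ : GoodOre k G₁) (h₂ : GoodOre k G₂) (hxy : G₁.Adj x y)
    (hP : P ⊆ G₂.neighborSet z) : GoodOre k (dhgoGraph G₁ G₂ x y z P) := by
  classical
  obtain ⟨p1, -⟩ := h₁
  obtain ⟨p2, q2⟩ := h₂
  refine ⟨?_, ?_⟩
  · unfold potZ at *
    rw [dhgo_adjCount hxy hP]
    have hc : (Fintype.card {w : V₂ // w ≠ z} : ℤ) = Fintype.card V₂ - 1 := by
      have h := sum_ne_subtype z (fun _ => (1 : ℤ))
      simp only [Finset.sum_const, Finset.card_univ, nsmul_eq_mul, mul_one] at h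
      rw [← h]
      congr!
    simp only [Finset.card_univ, Fintype.card_sum] at *
    push_cast
    rw [hc]
    linear_combination p1 + p2
  · intro u hu
    have hul : ∃ u₁, u = Sum.inl u₁ := by
      by_contra hcon
      have := hu (Finset.univ.map Function.Embedding.inl) (by
        simp only [Finset.mem_map, Finset.mem_univ, true_and, not_exists]
        intro a ha
        exact hcon ⟨a, ha.symm⟩) (by
        rw [Finset.card_map]
        have : ({x, y} : Finset V₁).card ≤ (Finset.univ : Finset V₁).card :=
          Finset.card_le_card (Finset.subset_univ _)
        rwa [Finset.card_pair hxy.ne] at this)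
      unfold potZ at this p1
      rw [dhgo_adjCount_left hxy, Finset.card_map] at this
      linarith
    obtain ⟨u₁, rfl⟩ := hul
    obtain ⟨S, hS1, hS2, hS3, hS4, hS5⟩ := q2 z (by
      intro W hW hc
      have hWm : (W.subtype (· ≠ z)).map (Function.Embedding.subtype _) = W := by
        rw [Finset.subtype_map]
        refine Finset.filter_true_of_mem fun w hw e => hW (e ▸ hw)
      have key := hu ((W.subtype (· ≠ z)).map Function.Embedding.inr) (by simp) (by
        rw [Finset.card_map, ← Finset.card_map (Function.Embedding.subtype _), hWm]; exact hc)
      have : potZ k (dhgoGraph G₁ G₂ x y z P) ((W.subtype (· ≠ z)).map Function.Embedding.inr)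
          = potZ k G₂ W := by
        conv_rhs => rw [← hWm]
        unfold potZ adjCount
        simp only [Finset.card_map, Finset.sum_map, Function.Embedding.inr_apply, dhgo_rr,
          Function.Embedding.subtype_apply]
        congr!
      rwa [this] at key)
    have hmem : ∀ w : {w : V₂ // w ≠ z},
        (Sum.inr w : V₁ ⊕ {w : V₂ // w ≠ z}) ∈ (S.subtype (· ≠ z)).map Function.Embedding.inr
          ↔ (w : V₂) ∈ S := by
      intro w
      simp
    have hnl : ∀ w : V₁,
        (Sum.inl w : V₁ ⊕ {w : V₂ // w ≠ z}) ∉ (S.subtype (· ≠ z)).map Function.Embedding.inr := by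
      intro w
      simp
    have hnbr : ∀ (w : V₁) (s : {w : V₂ // w ≠ z}),
        (dhgoGraph G₁ G₂ x y z P).Adj (Sum.inr s) (Sum.inl w) → G₂.Adj s z ∧ (w = x ∨ w = y) := by
      intro w s h
      rw [dhgo_rl] at h
      rcases h with ⟨h, h'⟩ | ⟨h, h'⟩
      · exact ⟨(hP h').symm, Or.inl h⟩
      · exact ⟨h'.1.symm, Or.inr h⟩
    refine ⟨(S.subtype (· ≠ z)).map Function.Embedding.inr, hnl u₁, ?_, ?_, ?_, ?_⟩
    · rw [Finset.card_map, ← Finset.card_map (Function.Embedding.subtype _), Finset.subtype_map,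
        Finset.filter_true_of_mem (show ∀ w ∈ S, w ≠ z from fun w hw e => hS1 (e ▸ hw))]
      exact hS2
    · rintro (a | a) ha (b | b) hb hab
      · exact absurd ha (hnl a)
      · exact absurd ha (hnl a)
      · exact absurd hb (hnl b)
      · rw [Finset.mem_coe, hmem] at ha hb
        rw [dhgo_rr]
        exact hS3 ha hb (fun e => hab (by rw [Subtype.ext e]))
    · rintro (v | v) hv
      · exact absurd hv (hnl v)
      · rw [dhgo_degZ hxy.ne hP]
        exact hS4 _ ((hmem v).1 hv)
    · rintro a b ha hb ⟨a' | a', ha', haa⟩ ⟨b' | b', hb', hbb⟩ hab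
      · exact hnl _ ha'
      · exact hnl _ ha'
      · exact hnl _ hb'
      rw [hmem] at ha' hb'
      rcases a with a | a <;> rcases b with b | b
      · have h1 := (hnbr _ _ haa).2
        have h2 := (hnbr _ _ hbb).2
        rw [dhgo_ll] at hab
        rcases h1 with rfl | rfl <;> rcases h2 with rfl | rfl
        · exact hab.1.ne rfl
        · exact hab.2 rfl
        · exact hab.2 Sym2.eq_swap
        · exact hab.1.ne rfl
      · rw [hmem] at hb
        exact hS5 z b hS1 hb ⟨a', ha', (hnbr _ _ haa).1⟩ ⟨b', hb', (dhgo_rr _ _).1 hbb⟩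
          (hnbr _ _ hab.symm).1.symm
      · rw [hmem] at ha
        exact hS5 a z ha hS1 ⟨a', ha', (dhgo_rr _ _).1 haa⟩ ⟨b', hb', (hnbr _ _ hbb).1⟩
          (hnbr _ _ hab).1
      · rw [hmem] at ha hb
        exact hS5 a b ha hb ⟨a', ha', (dhgo_rr _ _).1 haa⟩ ⟨b', hb', (dhgo_rr _ _).1 hbb⟩
          ((dhgo_rr _ _).1 hab)

end dhgo

theorem goodOre_of_isOreFin {k n : ℕ} {G : SimpleGraph (Fin n)} (h : IsOreFin k G) :
    GoodOre k G := by
  induction h with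
  | complete h =>
    obtain ⟨e⟩ := h
    exact (goodOre_top k).iso e
  | comp _ _ h ih₁ ih₂ =>
    obtain ⟨x, y, z, P, hxy, hP, -, -, ⟨e⟩⟩ := h
    exact (goodOre_dhgo ih₁ ih₂ hxy hP).iso e

/-- **Claim.** Let `k ≥ 4`, let `G` be a `k`-Ore graph, and let `u ∈ V(G)` be such that
`ρ_{k,G}(W) > (k+1)(k-2)` for every `W ⊆ V(G) - u` with `|W| ≥ 2`. Then `G` contains a
`(k-1)`-clique `S` all of whose vertices have degree exactly `k-1` in `G`, such that the set
`N(S) - S` of outside neighbors of `S` is an independent set. -/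
theorem kOre_special_clique {V : Type*} [Fintype V] [DecidableEq V] (k : ℕ) (hk : 4 ≤ k)
    (G : SimpleGraph V) [DecidableRel G.Adj] (hG : IsKOre k G) (u : V)
    (hpot : ∀ W : Finset V, u ∉ W → 2 ≤ W.card →
      ((k : ℤ) + 1) * ((k : ℤ) - 2) < potential k G W) :
    ∃ S : Finset V, S.card = k - 1 ∧ G.IsClique (S : Set V) ∧
      (∀ v ∈ S, G.degree v = k - 1) ∧
      ∀ a b : V, a ∉ S → b ∉ S → (∃ a' ∈ S, G.Adj a' a) → (∃ b' ∈ S, G.Adj b' b) →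
        ¬G.Adj a b := by
  classical
  obtain ⟨n, H, hH, ⟨e⟩⟩ := hG
  obtain ⟨S, -, h2, h3, h4, h5⟩ := ((goodOre_of_isOreFin hH).iso e).2 u (by
    intro W hW hc
    rw [← potential_eq_potZ]
    exact hpot W hW hc)
  refine ⟨S, h2, h3, ?_, h5⟩
  intro v hv
  have h := h4 v hv
  have hd : degZ G v = (G.degree v : ℤ) := by
    unfold degZ
    rw [← SimpleGraph.card_neighborFinset_eq_degree,
      SimpleGraph.neighborFinset_eq_filter, Finset.card_filter]
    push_cast
    refine Finset.sum_congr rfl fun b _ => ?_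
    congr
  omega
end

section
/- Let k ≥ 4, let G be a k-critical graph, and let A and B be disjoint subsets of V(G) such that A or B is an independent set, every vertex of A has degree k−1 in G, every vertex of B has degree k in G, and |A| + |B| ≥ 3. Then the number of edges of G with one endpoint in A and the other in B satisfies both e(A,B) ≤ 2(|A|+|B|) − 4 and e(A,B) ≤ |A| + 3|B| − 3. -/
open SimpleGraph

theorem aux_kernel {V : Type*} [DecidableEq V] (D : V → V → Prop) (I : V → Prop)
    (hirr : ∀ v, ¬ D v v)
    (hI : ∀ u v, I u → I v → ¬ D u v) (hR : ∀ u v, ¬ I u → ¬ I v → D u v → D v u) :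
    ∀ (n : ℕ) (S : Finset V), S.card ≤ n → ∃ K ⊆ S, (∀ u ∈ K, ∀ v ∈ K, ¬ D u v) ∧
      ∀ v ∈ S, v ∉ K → ∃ w ∈ K, D v w := by
  classical
  intro n
  induction n with
  | zero =>
    intro S hS
    have : S = ∅ := by simpa using hS
    subst this
    exact ⟨∅, by simp⟩
  | succ n ih =>
    intro S hS
    by_cases h : ∃ r ∈ S, ¬ I r ∧ ∀ w ∈ S, I w → ¬ D r w
    · obtain ⟨r, hrS, hrI, hr⟩ := h
      have hlt : (S.filter fun v => v ≠ r ∧ ¬ D v r) ⊂ S := by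
        refine Finset.filter_ssubset.2 ⟨r, hrS, by simp⟩
      obtain ⟨K, hKS, hK1, hK2⟩ := ih (S.filter fun v => v ≠ r ∧ ¬ D v r)
        (by have := Finset.card_lt_card hlt; omega)
      have hK3 : ∀ v ∈ K, v ∈ S ∧ v ≠ r ∧ ¬ D v r := fun v hv => by
        have := hKS hv
        simpa using this
      refine ⟨insert r K, ?_, ?_, ?_⟩
      · intro v hv
        rcases Finset.mem_insert.1 hv with rfl | hv
        · exact hrS
        · exact (hK3 v hv).1
      · intro u hu v hv huv
        rcases Finset.mem_insert.1 hu with rfl | hu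
        · rcases Finset.mem_insert.1 hv with rfl | hv
          · exact hirr _ huv
          · by_cases hvI : I v
            · exact hr v (hK3 v hv).1 hvI huv
            · exact (hK3 v hv).2.2 (hR _ _ hrI hvI huv)
        · rcases Finset.mem_insert.1 hv with hvr | hv
          · rw [hvr] at huv
            exact (hK3 u (by assumption)).2.2 huv
          · exact hK1 u (by assumption) v (by assumption) huv
      · intro v hv hvK
        have hvr : v ≠ r := fun h => hvK (by simp [h])
        by_cases hD : D v r
        · exact ⟨r, by simp, hD⟩
        · obtain ⟨w, hw, hvw⟩ := hK2 v (by simp [hv, hvr, hD])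
            (fun h => hvK (Finset.mem_insert_of_mem h))
          exact ⟨w, Finset.mem_insert_of_mem hw, hvw⟩
    · push Not at h
      refine ⟨S.filter I, Finset.filter_subset _ _, ?_, ?_⟩
      · intro u hu v hv
        exact hI u v (Finset.mem_filter.1 hu).2 (Finset.mem_filter.1 hv).2
      · intro v hv hvK
        have hvI : ¬ I v := fun h => hvK (by simp [hv, h])
        obtain ⟨w, hw, hwI, hD⟩ := h v hv hvI
        exact ⟨w, by simp [hw, hwI], hD⟩

open Classical in
theorem aux_list {V C : Type*} [Nonempty C] (D : V → V → Prop)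
    (hker : ∀ S : Finset V, ∃ K ⊆ S, (∀ u ∈ K, ∀ v ∈ K, ¬ D u v) ∧
      ∀ v ∈ S, v ∉ K → ∃ w ∈ K, D v w) :
    ∀ (n : ℕ) (S : Finset V) (L : V → Finset C), S.card ≤ n →
      (∀ v ∈ S, (S.filter fun w => D v w).card < (L v).card) →
      ∃ c : V → C, (∀ v ∈ S, c v ∈ L v) ∧ ∀ u ∈ S, ∀ v ∈ S, D u v → c u ≠ c v := by
  intro n
  induction n with
  | zero =>
    intro S L hS hL
    have : S = ∅ := by simpa using hS
    subst this
    exact ⟨fun _ => Classical.arbitrary C, by simp⟩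
  | succ n ih =>
    intro S L hS hL
    by_cases hne : S = ∅
    · subst hne
      exact ⟨fun _ => Classical.arbitrary C, by simp⟩
    obtain ⟨v0, hv0⟩ := Finset.nonempty_iff_ne_empty.2 hne
    obtain ⟨α, hα⟩ := Finset.card_pos.1 (lt_of_le_of_lt (Nat.zero_le _) (hL v0 hv0))
    obtain ⟨K, hKS, hK1, hK2⟩ := hker (S.filter fun v => α ∈ L v)
    have hK3 : ∀ v ∈ K, v ∈ S ∧ α ∈ L v := fun v hv => by simpa using hKS hv
    have hKne : ∃ v, v ∈ K := by
      by_contra hcon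
      push Not at hcon
      obtain ⟨w, hw, _⟩ := hK2 v0 (by simp [hv0, hα]) (hcon v0)
      exact hcon w hw
    have hlt : (S \ K).card < S.card := by
      obtain ⟨v, hv⟩ := hKne
      apply Finset.card_lt_card
      refine Finset.ssubset_iff_subset_ne.2 ⟨Finset.sdiff_subset, fun h => ?_⟩
      have := (hK3 v hv).1
      rw [← h] at this
      exact (Finset.mem_sdiff.1 this).2 hv
    obtain ⟨c, hc1, hc2⟩ := ih (S \ K) (fun v => (L v).erase α) (by omega) (by
      intro v hv
      obtain ⟨hvS, hvK⟩ := Finset.mem_sdiff.1 hv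
      have h0 := hL v hvS
      have hsub : ((S \ K).filter fun w => D v w) ⊆ S.filter fun w => D v w :=
        Finset.filter_subset_filter _ Finset.sdiff_subset
      by_cases hαv : α ∈ L v
      · rw [Finset.card_erase_of_mem hαv]
        obtain ⟨w, hw, hvw⟩ := hK2 v (by simp [hvS, hαv]) hvK
        have : ((S \ K).filter fun w => D v w).card < (S.filter fun w => D v w).card := by
          apply Finset.card_lt_card
          refine Finset.ssubset_iff_subset_ne.2 ⟨hsub, fun h => ?_⟩
          have hw' : w ∈ S.filter fun w => D v w := by simp [(hK3 w hw).1, hvw]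
          rw [← h] at hw'
          simp [hw] at hw'
        omega
      · rw [Finset.erase_eq_of_notMem hαv]
        exact lt_of_le_of_lt (Finset.card_le_card hsub) h0)
    refine ⟨fun v => if v ∈ K then α else c v, ?_, ?_⟩
    · intro v hv
      by_cases hvK : v ∈ K
      · simpa [hvK] using (hK3 v hvK).2
      · simpa [hvK] using Finset.mem_of_mem_erase (hc1 v (by simp [hv, hvK]))
    · intro u hu v hv huv
      by_cases huK : u ∈ K
      · by_cases hvK : v ∈ K
        · exact absurd huv (hK1 u huK v hvK)
        · simpa [huK, hvK] using (Finset.ne_of_mem_erase (hc1 v (by simp [hv, hvK]))).symm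
      · by_cases hvK : v ∈ K
        · simpa [huK, hvK] using (Finset.ne_of_mem_erase (hc1 u (by simp [hu, huK])))
        · simpa [huK, hvK] using hc2 u (by simp [hu, huK]) v (by simp [hv, hvK]) huv

/-- No kernel-perfect orientation with small out-degrees. -/
theorem aux_orient {V : Type*} [Fintype V] [DecidableEq V] (k : ℕ)
    (hk : 4 ≤ k) (G : SimpleGraph V) [DecidableRel G.Adj] (hG : IsKCritical k G)
    (S : Finset V) (hS : ∃ u ∈ S, ∃ v, G.Adj u v) (D : V → V → Prop)
    (hker : ∀ S : Finset V, ∃ K ⊆ S, (∀ u ∈ K, ∀ v ∈ K, ¬ D u v) ∧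
      ∀ v ∈ S, v ∉ K → ∃ w ∈ K, D v w)
    (hDG : ∀ u v, D u v → G.Adj u v)
    (hGD : ∀ u ∈ S, ∀ v ∈ S, G.Adj u v → D u v ∨ D v u)
    (hdeg : ∀ v ∈ S, ∃ T ⊆ S, (∀ w ∈ T, G.Adj v w ∧ ¬ D v w) ∧ G.degree v + 1 ≤ T.card + (k - 1)) :
    False := by
  classical
  obtain ⟨hchi, hcrit⟩ := hG
  let H : SimpleGraph V :=
    { Adj := fun u v => G.Adj u v ∧ u ∉ S ∧ v ∉ S
      symm := ⟨fun u v h => ⟨h.1.symm, h.2.2, h.2.1⟩⟩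
      loopless := ⟨fun u h => G.loopless.irrefl u h.1⟩ }
  have hH : H < G := by
    refine lt_of_le_of_ne (fun u v h => h.1) (fun h => ?_)
    obtain ⟨u, hu, v, huv⟩ := hS
    rw [← h] at huv
    exact huv.2.1 hu
  obtain ⟨c0⟩ := hcrit H hH
  haveI : Nonempty (Fin (k - 1)) := ⟨⟨0, by omega⟩⟩
  let N : V → Finset V := fun v => (G.neighborFinset v).filter fun w => w ∉ S
  obtain ⟨c, hc1, hc2⟩ := aux_list (C := Fin (k - 1)) D hker S.card S
    (fun v => Finset.univ \ (N v).image c0) le_rfl (by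
      intro v hv
      obtain ⟨T, hTS, hT, hd⟩ := hdeg v hv
      have h1 : (Finset.univ \ (N v).image c0).card + ((N v).image c0).card = k - 1 := by
        rw [Finset.card_sdiff_add_card_eq_card (Finset.subset_univ _)]
        simp
      have h2 : ((N v).image c0).card ≤ (N v).card := Finset.card_image_le
      have h3 : (S.filter fun w => D v w).card + T.card + (N v).card ≤ G.degree v := by
        rw [← Finset.card_union_of_disjoint, ← Finset.card_union_of_disjoint,
          ← G.card_neighborFinset_eq_degree]
        · apply Finset.card_le_card
          intro w hw
          rw [mem_neighborFinset]
          simp only [Finset.mem_union, Finset.mem_filter, N, mem_neighborFinset] at hw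
          rcases hw with (hw | hw) | hw
          · exact hDG _ _ hw.2
          · exact (hT w hw).1
          · exact hw.1
        · rw [Finset.disjoint_left]
          intro w hw hw'
          have h5 := (Finset.mem_filter.1 hw').2
          rcases Finset.mem_union.1 hw with hw | hw
          · exact h5 (Finset.mem_filter.1 hw).1
          · exact h5 (hTS hw)
        · rw [Finset.disjoint_left]
          intro w hw hw'
          exact (hT w hw').2 (Finset.mem_filter.1 hw).2
      omega)
  have hmix : ∀ u ∈ S, ∀ v, v ∉ S → G.Adj u v → c u ≠ c0 v := by
    intro u hu v hv huv h
    have := hc1 u hu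
    rw [Finset.mem_sdiff] at this
    refine this.2 (Finset.mem_image.2 ⟨v, ?_, h.symm⟩)
    simp [N, hv, huv]
  have hcol : G.Colorable (k - 1) := by
    refine ⟨Coloring.mk (fun v => if v ∈ S then c v else c0 v) ?_⟩
    intro u v huv
    by_cases hu : u ∈ S
    · by_cases hv : v ∈ S
      · simp only [hu, hv, if_true]
        rcases hGD u hu v hv huv with h | h
        · exact hc2 u hu v hv h
        · exact (hc2 v hv u hu h).symm
      · simpa [hu, hv] using hmix u hu v hv huv
    · by_cases hv : v ∈ S
      · simpa [hu, hv] using (hmix v hv u hu huv.symm).symm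
      · simpa [hu, hv] using c0.valid (show H.Adj u v from ⟨huv, hu, hv⟩)
  have := hcol.chromaticNumber_le
  rw [hchi] at this
  have : k ≤ k - 1 := by exact_mod_cast this
  omega

theorem aux_key {V : Type*} [Fintype V] [DecidableEq V] (k : ℕ)
    (hk : 4 ≤ k) (G : SimpleGraph V) [DecidableRel G.Adj] (hG : IsKCritical k G)
    (A B : Finset V) (hAB : Disjoint A B) (hne : 0 < A.card + B.card)
    (hind : (∀ a ∈ A, ∀ a' ∈ A, ¬G.Adj a a') ∨ (∀ b ∈ B, ∀ b' ∈ B, ¬G.Adj b b'))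
    (hA : ∀ a ∈ A, G.degree a = k - 1) (hB : ∀ b ∈ B, G.degree b = k)
    (hHall : ∀ S ⊆ A, ∀ T ⊆ B, S.card + 2 * T.card ≤
      (((A ×ˢ B).filter fun p => G.Adj p.1 p.2).filter fun p => p.1 ∈ S ∨ p.2 ∈ T).card) :
    False := by
  classical
  set E := (A ×ˢ B).filter fun p => G.Adj p.1 p.2 with hE
  have hEm : ∀ p, p ∈ E ↔ (p.1 ∈ A ∧ p.2 ∈ B) ∧ G.Adj p.1 p.2 := by
    intro p; simp [hE]
  let t : (A ⊕ (B × Bool)) → Finset (V × V) := fun i =>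
    Sum.elim (fun a => E.filter fun p => p.1 = a.1) (fun b => E.filter fun p => p.2 = b.1.1) i
  have hcond : ∀ s : Finset (A ⊕ (B × Bool)), s.card ≤ (s.biUnion t).card := by
    intro s
    let S : Finset V := s.toLeft.image Subtype.val
    let T : Finset V := s.toRight.image (fun b => b.1.1)
    have h1 : s.toLeft.card = S.card :=
      (Finset.card_image_of_injective _ Subtype.val_injective).symm
    have h2 : s.toRight.card ≤ 2 * T.card := by
      have : s.toRight ⊆ (s.toRight.image Prod.fst) ×ˢ (Finset.univ : Finset Bool) := by
        intro b hb
        simp only [Finset.mem_product, Finset.mem_univ, and_true]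
        exact Finset.mem_image_of_mem _ hb
      have h3 := Finset.card_le_card this
      have h4 : T.card = (s.toRight.image Prod.fst).card := by
        rw [← Finset.card_image_of_injective (s.toRight.image Prod.fst) Subtype.val_injective,
          Finset.image_image]
        rfl
      rw [Finset.card_product] at h3
      simp at h3
      omega
    have h3 := hHall S (by
      intro x hx
      obtain ⟨y, _, rfl⟩ := Finset.mem_image.1 hx
      exact y.2) T (by
      intro x hx
      obtain ⟨y, _, rfl⟩ := Finset.mem_image.1 hx
      exact y.1.2)
    have h4 : (E.filter fun p => p.1 ∈ S ∨ p.2 ∈ T) ⊆ s.biUnion t := by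
      intro p hp
      obtain ⟨hpE, hp⟩ := Finset.mem_filter.1 hp
      rw [Finset.mem_biUnion]
      rcases hp with hp | hp
      · obtain ⟨y, hy, hyp⟩ := Finset.mem_image.1 hp
        exact ⟨Sum.inl y, Finset.mem_toLeft.1 hy, Finset.mem_filter.2 ⟨hpE, hyp.symm⟩⟩
      · obtain ⟨y, hy, hyp⟩ := Finset.mem_image.1 hp
        exact ⟨Sum.inr y, Finset.mem_toRight.1 hy, Finset.mem_filter.2 ⟨hpE, hyp.symm⟩⟩
    have h5 := Finset.card_le_card h4
    have h6 := Finset.card_toLeft_add_card_toRight (u := s)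
    omega
  obtain ⟨f, hfinj, hf⟩ := (Finset.all_card_le_biUnion_card_iff_exists_injective t).1 hcond
  have hfl : ∀ a : A, f (Sum.inl a) ∈ E ∧ (f (Sum.inl a)).1 = a.1 := fun a =>
    Finset.mem_filter.1 (hf (Sum.inl a))
  have hfr : ∀ b : B × Bool, f (Sum.inr b) ∈ E ∧ (f (Sum.inr b)).2 = b.1.1 := fun b =>
    Finset.mem_filter.1 (hf (Sum.inr b))
  -- edges directed towards A
  let P : V × V → Prop := fun p => ∃ a : A, f (Sum.inl a) = p
  have hdisj : ∀ x, x ∈ A → x ∈ B → False := fun x h1 h2 => Finset.disjoint_left.1 hAB h1 h2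
  let D : V → V → Prop := fun u v => G.Adj u v ∧ u ∈ A ∪ B ∧ v ∈ A ∪ B ∧
    (u ∈ A → v ∈ B → ¬ P (u, v)) ∧ (u ∈ B → v ∈ A → P (v, u))
  have hDsame : ∀ u v, D u v → ((u ∈ A ∧ v ∈ A) ∨ (u ∈ B ∧ v ∈ B)) → D v u := by
    rintro u v ⟨h1, h2, h3, h4, h5⟩ (⟨hu, hv⟩ | ⟨hu, hv⟩)
    · exact ⟨h1.symm, h3, h2, fun _ h => (hdisj _ hu h).elim, fun h _ => (hdisj _ hv h).elim⟩
    · exact ⟨h1.symm, h3, h2, fun h _ => (hdisj _ h hv).elim, fun _ h => (hdisj _ h hu).elim⟩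
  have hker : ∀ S : Finset V, ∃ K ⊆ S, (∀ u ∈ K, ∀ v ∈ K, ¬ D u v) ∧
      ∀ v ∈ S, v ∉ K → ∃ w ∈ K, D v w := by
    intro S
    rcases hind with hind | hind
    · refine aux_kernel D (fun v => v ∈ A) (fun v h => G.loopless.irrefl v h.1)
        (fun u v hu hv h => hind u hu v hv h.1) ?_ S.card S le_rfl
      intro u v hu hv h
      have h1 := Finset.mem_union.1 h.2.1
      have h2 := Finset.mem_union.1 h.2.2.1
      exact hDsame u v h (Or.inr ⟨h1.resolve_left hu, h2.resolve_left hv⟩)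
    · refine aux_kernel D (fun v => v ∈ B) (fun v h => G.loopless.irrefl v h.1)
        (fun u v hu hv h => hind u hu v hv h.1) ?_ S.card S le_rfl
      intro u v hu hv h
      have h1 := Finset.mem_union.1 h.2.1
      have h2 := Finset.mem_union.1 h.2.2.1
      exact hDsame u v h (Or.inl ⟨h1.resolve_right hu, h2.resolve_right hv⟩)
  refine aux_orient k hk G hG (A ∪ B) ?_ D hker (fun u v h => h.1) ?_ ?_
  · have : (A ∪ B).Nonempty := by
      rw [← Finset.card_pos, Finset.card_union_of_disjoint hAB]
      exact hne
    obtain ⟨x, hx⟩ := this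
    refine ⟨x, hx, ?_⟩
    have hd : 0 < G.degree x := by
      rcases Finset.mem_union.1 hx with h | h
      · rw [hA x h]; omega
      · rw [hB x h]; omega
    exact (G.degree_pos_iff_exists_adj x).1 hd
  · intro u hu v hv huv
    rcases Finset.mem_union.1 hu with h1 | h1 <;> rcases Finset.mem_union.1 hv with h2 | h2
    · exact Or.inl ⟨huv, hu, hv, fun _ h => (hdisj _ h2 h).elim, fun h _ => (hdisj _ h1 h).elim⟩
    · by_cases hP : P (u, v)
      · exact Or.inr ⟨huv.symm, hv, hu, fun h _ => (hdisj _ h h2).elim, fun _ _ => hP⟩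
      · exact Or.inl ⟨huv, hu, hv, fun _ _ => hP, fun h _ => (hdisj _ h1 h).elim⟩
    · by_cases hP : P (v, u)
      · exact Or.inl ⟨huv, hu, hv, fun h _ => (hdisj _ h h1).elim, fun _ _ => hP⟩
      · exact Or.inr ⟨huv.symm, hv, hu, fun _ _ => hP, fun h _ => (hdisj _ h2 h).elim⟩
    · exact Or.inl ⟨huv, hu, hv, fun h _ => (hdisj _ h h1).elim, fun _ h => (hdisj _ h h2).elim⟩
  · intro v hv
    rcases Finset.mem_union.1 hv with h | h
    · obtain ⟨hE1, hE2⟩ := hfl ⟨v, h⟩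
      obtain ⟨⟨hE3, hE4⟩, hE5⟩ := (hEm _).1 hE1
      have heq : f (Sum.inl ⟨v, h⟩) = (v, (f (Sum.inl ⟨v, h⟩)).2) := Prod.ext hE2 rfl
      refine ⟨{(f (Sum.inl ⟨v, h⟩)).2}, ?_, ?_, ?_⟩
      · simp only [Finset.singleton_subset_iff, Finset.mem_union]
        exact Or.inr hE4
      · intro w hw
        rw [Finset.mem_singleton] at hw
        subst hw
        refine ⟨by rw [hE2] at hE5; exact hE5, fun hD => ?_⟩
        exact hD.2.2.2.1 h hE4 ⟨⟨v, h⟩, heq⟩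
      · rw [hA v h]; simp
    · have hb : ∀ i : Bool, (f (Sum.inr (⟨v, h⟩, i))).1 ∈ A ∧
          G.Adj v (f (Sum.inr (⟨v, h⟩, i))).1 ∧
          f (Sum.inr (⟨v, h⟩, i)) = ((f (Sum.inr (⟨v, h⟩, i))).1, v) := by
        intro i
        obtain ⟨hE1, hE2⟩ := hfr (⟨v, h⟩, i)
        obtain ⟨⟨hE3, hE4⟩, hE5⟩ := (hEm _).1 hE1
        rw [hE2] at hE5
        exact ⟨hE3, hE5.symm, Prod.ext rfl hE2⟩
      refine ⟨(Finset.univ : Finset Bool).image fun i => (f (Sum.inr (⟨v, h⟩, i))).1, ?_, ?_, ?_⟩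
      · intro w hw
        obtain ⟨i, _, rfl⟩ := Finset.mem_image.1 hw
        exact Finset.mem_union_left _ (hb i).1
      · intro w hw
        obtain ⟨i, _, rfl⟩ := Finset.mem_image.1 hw
        refine ⟨(hb i).2.1, fun hD => ?_⟩
        obtain ⟨a, ha⟩ := hD.2.2.2.2 h (hb i).1
        rw [← (hb i).2.2] at ha
        simpa using hfinj ha
      · rw [Finset.card_image_of_injective, hB v h]
        · simp; omega
        · intro i j hij
          have : f (Sum.inr (⟨v, h⟩, i)) = f (Sum.inr (⟨v, h⟩, j)) := by
            rw [(hb i).2.2, (hb j).2.2]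
            exact Prod.ext hij rfl
          simpa using hfinj this

theorem aux_countA {V : Type*} [DecidableEq V] (R : V → V → Prop) [DecidableRel R]
    (A B S : Finset V) (hS : S ⊆ A) (d : ℕ) (h : ∀ a ∈ A, d ≤ (B.filter fun b => R a b).card) :
    d * S.card ≤ (((A ×ˢ B).filter fun p => R p.1 p.2).filter fun p => p.1 ∈ S).card := by
  rw [mul_comm, ← smul_eq_mul]
  rw [Finset.card_eq_sum_card_fiberwise (f := Prod.fst) (t := S)
    (by intro p hp; exact (Finset.mem_filter.1 hp).2)]
  apply Finset.card_nsmul_le_sum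
  intro a ha
  refine (h a (hS ha)).trans ?_
  rw [← Finset.card_image_of_injective _ (Prod.mk_right_injective a)]
  apply Finset.card_le_card
  intro p hp
  obtain ⟨b, hb, rfl⟩ := Finset.mem_image.1 hp
  have := Finset.mem_filter.1 hb
  simp [ha, hS ha, this.1, this.2]

theorem aux_countB {V : Type*} [DecidableEq V] (R : V → V → Prop) [DecidableRel R]
    (A B T : Finset V) (hT : T ⊆ B) (d : ℕ) (h : ∀ b ∈ B, d ≤ (A.filter fun a => R a b).card) :
    d * T.card ≤ (((A ×ˢ B).filter fun p => R p.1 p.2).filter fun p => p.2 ∈ T).card := by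
  rw [mul_comm, ← smul_eq_mul]
  rw [Finset.card_eq_sum_card_fiberwise (f := Prod.snd) (t := T)
    (by intro p hp; exact (Finset.mem_filter.1 hp).2)]
  apply Finset.card_nsmul_le_sum
  intro b hb
  refine (h b (hT hb)).trans ?_
  rw [← Finset.card_image_of_injective _ (Prod.mk_left_injective b)]
  apply Finset.card_le_card
  intro p hp
  obtain ⟨a, ha, rfl⟩ := Finset.mem_image.1 hp
  have := Finset.mem_filter.1 ha
  simp [hb, hT hb, this.1, this.2]

theorem aux_eraseA {V : Type*} [DecidableEq V] (R : V → V → Prop) [DecidableRel R]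
    (A B : Finset V) (a : V) :
    ((A ×ˢ B).filter fun p => R p.1 p.2).card ≤
      (((A.erase a) ×ˢ B).filter fun p => R p.1 p.2).card + (B.filter fun b => R a b).card := by
  rw [← Finset.card_image_of_injective (B.filter fun b => R a b) (Prod.mk_right_injective a)]
  refine (Finset.card_le_card ?_).trans (Finset.card_union_le _ _)
  rintro ⟨x, y⟩ hp
  simp only [Finset.mem_filter, Finset.mem_product, Finset.mem_union, Finset.mem_image,
    Finset.mem_erase, Prod.mk.injEq] at hp ⊢
  by_cases hx : x = a
  · subst hx
    exact Or.inr ⟨y, ⟨hp.1.2, hp.2⟩, rfl, rfl⟩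
  · exact Or.inl ⟨⟨⟨hx, hp.1.1⟩, hp.1.2⟩, hp.2⟩

theorem aux_eraseB {V : Type*} [DecidableEq V] (R : V → V → Prop) [DecidableRel R]
    (A B : Finset V) (b : V) :
    ((A ×ˢ B).filter fun p => R p.1 p.2).card ≤
      ((A ×ˢ (B.erase b)).filter fun p => R p.1 p.2).card + (A.filter fun a => R a b).card := by
  rw [← Finset.card_image_of_injective (A.filter fun a => R a b) (Prod.mk_left_injective b)]
  refine (Finset.card_le_card ?_).trans (Finset.card_union_le _ _)
  rintro ⟨x, y⟩ hp
  simp only [Finset.mem_filter, Finset.mem_product, Finset.mem_union, Finset.mem_image,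
    Finset.mem_erase, Prod.mk.injEq] at hp ⊢
  by_cases hx : y = b
  · subst hx
    exact Or.inr ⟨x, ⟨hp.1.1, hp.2⟩, rfl, rfl⟩
  · exact Or.inl ⟨⟨hp.1.1, hx, hp.1.2⟩, hp.2⟩

theorem aux_main {V : Type*} [Fintype V] [DecidableEq V] (k : ℕ)
    (hk : 4 ≤ k) (G : SimpleGraph V) [DecidableRel G.Adj] (hG : IsKCritical k G)
    (p q r : ℕ) (hpq : ∀ s t e : ℕ, (p + 1) * s ≤ e → (q + 1) * t ≤ e → s + 2 * t ≤ e)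
    (hbase : ∀ m n : ℕ, m + n = 3 → m * n + r ≤ p * m + q * n) (n : ℕ) :
    ∀ (A B : Finset V), Disjoint A B →
    ((∀ a ∈ A, ∀ a' ∈ A, ¬G.Adj a a') ∨ (∀ b ∈ B, ∀ b' ∈ B, ¬G.Adj b b')) →
    (∀ a ∈ A, G.degree a = k - 1) → (∀ b ∈ B, G.degree b = k) →
    A.card + B.card = n + 3 →
    ((A ×ˢ B).filter fun p => G.Adj p.1 p.2).card + r ≤ p * A.card + q * B.card := by
  induction n with
  | zero =>
    intro A B _ _ _ _ hc
    have h1 := hbase _ _ hc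
    have h2 := Finset.card_filter_le (A ×ˢ B) (fun p => G.Adj p.1 p.2)
    rw [Finset.card_product] at h2
    omega
  | succ n ih =>
    intro A B hAB hind hA hB hc
    by_cases h1 : ∃ a ∈ A, (B.filter fun b => G.Adj a b).card ≤ p
    · obtain ⟨a, ha, hap⟩ := h1
      have h2 := aux_eraseA G.Adj A B a
      have h3 := Finset.card_erase_add_one ha
      have h4 := ih (A.erase a) B (hAB.mono_left (Finset.erase_subset _ _))
        (hind.imp_left fun h x hx y hy =>
          h x (Finset.mem_of_mem_erase hx) y (Finset.mem_of_mem_erase hy))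
        (fun x hx => hA x (Finset.mem_of_mem_erase hx)) hB (by omega)
      rw [← h3]
      linarith
    by_cases h2 : ∃ b ∈ B, (A.filter fun a => G.Adj a b).card ≤ q
    · obtain ⟨b, hb, hbq⟩ := h2
      have h2 := aux_eraseB G.Adj A B b
      have h3 := Finset.card_erase_add_one hb
      have h4 := ih A (B.erase b) (hAB.mono_right (Finset.erase_subset _ _))
        (hind.imp_right fun h x hx y hy =>
          h x (Finset.mem_of_mem_erase hx) y (Finset.mem_of_mem_erase hy))
        hA (fun x hx => hB x (Finset.mem_of_mem_erase hx)) (by omega)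
      rw [← h3]
      linarith
    push Not at h1 h2
    exfalso
    refine aux_key k hk G hG A B hAB (by omega) hind hA hB ?_
    intro S hS T hT
    apply hpq
    · refine (aux_countA G.Adj A B S hS (p + 1) (fun a ha => h1 a ha)).trans
        (Finset.card_le_card ?_)
      intro x hx
      rw [Finset.mem_filter] at hx ⊢
      exact ⟨hx.1, Or.inl hx.2⟩
    · refine (aux_countB G.Adj A B T hT (q + 1) (fun a ha => h2 a ha)).trans
        (Finset.card_le_card ?_)
      intro x hx
      rw [Finset.mem_filter] at hx ⊢
      exact ⟨hx.1, Or.inr hx.2⟩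

/-- **Lemma (Kostochka–Yancey, Corollary 9).** Let `G` be a `k`-critical graph and let `A`,
`B` be disjoint vertex subsets such that `A` or `B` is independent, every vertex of `A` has
degree `k-1`, every vertex of `B` has degree `k`, and `|A| + |B| ≥ 3`. Then
`e(A,B) ≤ 2(|A|+|B|) - 4` and `e(A,B) ≤ |A| + 3|B| - 3`. -/
theorem kCritical_edges_between_low_degree {V : Type*} [Fintype V] [DecidableEq V] (k : ℕ)
    (hk : 4 ≤ k) (G : SimpleGraph V) [DecidableRel G.Adj] (hG : IsKCritical k G)
    (A B : Finset V) (hAB : Disjoint A B)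
    (hind : (∀ a ∈ A, ∀ a' ∈ A, ¬G.Adj a a') ∨ (∀ b ∈ B, ∀ b' ∈ B, ¬G.Adj b b'))
    (hA : ∀ a ∈ A, G.degree a = k - 1) (hB : ∀ b ∈ B, G.degree b = k)
    (hcard : 3 ≤ A.card + B.card) :
    (((A ×ˢ B).filter fun p => G.Adj p.1 p.2).card : ℤ) ≤ 2 * ((A.card : ℤ) + B.card) - 4 ∧
      (((A ×ˢ B).filter fun p => G.Adj p.1 p.2).card : ℤ) ≤ (A.card : ℤ) + 3 * B.card - 3 := by
  have hn : A.card + B.card = (A.card + B.card - 3) + 3 := by omega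
  constructor
  · have := aux_main k hk G hG 2 2 4 (by intros; omega)
      (by
        intro m n h
        have hm : m ≤ 3 := by omega
        interval_cases m <;> omega) _ A B hAB hind hA hB hn
    omega
  · have := aux_main k hk G hG 1 3 3 (by intros; omega)
      (by
        intro m n h
        have hm : m ≤ 3 := by omega
        interval_cases m <;> omega) _ A B hAB hind hA hB hn
    omega
end

section
/- Let i ≥ 1 and s ≥ 2 be integers, let R = {u_1, …, u_s} be a finite set, and let w : R → ℤ assign a positive integer weight to each element with w(u_1) + ⋯ + w(u_s) ≥ 2i. Then there exists a graph H with vertex set R and at most i edges such that d_H(u_j) ≤ w(u_j) for every 1 ≤ j ≤ s, and for every independent set M of H with |M| ≥ 2 one has Σ_{u ∈ R − M} w(u) ≥ i. -/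
open SimpleGraph

theorem wge_aux {V : Type*} [Fintype V] [DecidableEq V] (i : ℕ) : ∀ (w : V → ℕ),
    2 * i ≤ ∑ v, w v → (∀ v, i + w v ≤ ∑ v, w v) →
    ∃ (H : SimpleGraph V) (_ : DecidableRel H.Adj),
      H.edgeFinset.card ≤ i ∧ (∀ v, H.degree v ≤ w v) ∧
      ∀ M : Finset V, (∀ a ∈ M, ∀ b ∈ M, ¬H.Adj a b) → i ≤ ∑ u ∈ Mᶜ, w u := by
  classical
  induction i with
  | zero =>
    intro w _ _
    refine ⟨⊥, inferInstance, ?_, ?_, ?_⟩ <;> simp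
  | succ i ih =>
    intro w h1 h2
    have hne : (Finset.univ : Finset V).Nonempty := by
      by_contra h
      rw [Finset.not_nonempty_iff_eq_empty] at h
      rw [h] at h1
      simp at h1
    obtain ⟨a, -, ha⟩ := Finset.exists_max_image Finset.univ w hne
    have hsa : w a + ∑ v ∈ Finset.univ.erase a, w v = ∑ v, w v :=
      Finset.add_sum_erase _ _ (Finset.mem_univ a)
    have hne2 : (Finset.univ.erase a : Finset V).Nonempty := by
      by_contra h
      rw [Finset.not_nonempty_iff_eq_empty] at h
      rw [h] at hsa
      have := h2 a
      simp at hsa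
      omega
    obtain ⟨b, hb, hbm⟩ := Finset.exists_max_image (Finset.univ.erase a) w hne2
    have hba : b ≠ a := Finset.ne_of_mem_erase hb
    have hsb : w b + ∑ v ∈ (Finset.univ.erase a).erase b, w v = ∑ v ∈ Finset.univ.erase a, w v :=
      Finset.add_sum_erase _ _ hb
    have hab1 : w b ≤ w a := ha b (Finset.mem_univ b)
    have hb1 : 1 ≤ w b := by
      by_contra h
      have h0 : w b = 0 := by omega
      have : ∑ v ∈ Finset.univ.erase a, w v = 0 := by
        apply Finset.sum_eq_zero
        intro v hv
        have := hbm v hv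
        omega
      have := h2 a
      omega
    let e : V → ℕ := fun v => if v = a ∨ v = b then 1 else 0
    let w' : V → ℕ := fun v => w v - e v
    have hew : ∀ v, w' v + e v = w v := by
      intro v
      simp only [w', e]
      split_ifs with h
      · rcases h with rfl | rfl <;> omega
      · omega
    have hse : ∑ v, e v = 2 := by
      have : (Finset.univ.filter fun v => v = a ∨ v = b) = {a, b} := by ext; simp
      simp only [e, Finset.sum_boole, this]
      rw [Finset.card_pair hba.symm]; rfl
    have hs' : ∑ v, w' v + 2 = ∑ v, w v := by
      rw [← hse, ← Finset.sum_add_distrib]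
      exact Finset.sum_congr rfl fun v _ => hew v
    obtain ⟨H, dH, hE, hD, hM⟩ := ih w' (by omega) (by
      intro v
      have h2v := h2 v
      have hv := hew v
      by_cases h : v = a ∨ v = b
      · have : e v = 1 := by simp [e, h]
        omega
      · have : e v = 0 := by simp [e, h]
        push Not at h
        have hvm : v ∈ (Finset.univ.erase a).erase b := by simp [h]
        have hvb := hbm v (Finset.mem_of_mem_erase hvm)
        have hsv := Finset.add_sum_erase _ w hvm
        omega)
    obtain ⟨K, hK⟩ : ∃ K : SimpleGraph V, ∀ x y, K.Adj x y ↔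
        (H.Adj x y ∨ ((x = a ∧ y = b ∨ x = b ∧ y = a) ∧ x ≠ y)) :=
      ⟨H ⊔ SimpleGraph.edge a b, fun x y => by simp [SimpleGraph.edge_adj]⟩
    refine ⟨K, Classical.decRel _, ?_, ?_, ?_⟩
    · have : K.edgeFinset ⊆ insert s(a, b) H.edgeFinset := by
        intro x
        induction x with
        | _ x y =>
          simp [hK]
          grind
      have h9 := (Finset.card_le_card this).trans (Finset.card_insert_le _ _)
      omega
    · intro v
      rw [← hew v]
      have key : K.neighborFinset v ⊆
          H.neighborFinset v ∪ (if v = a then {b} else if v = b then {a} else ∅) := by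
        intro x
        simp [hK]
        grind
      have h3 := (Finset.card_le_card key).trans (Finset.card_union_le _ _)
      rw [SimpleGraph.card_neighborFinset_eq_degree,
        SimpleGraph.card_neighborFinset_eq_degree] at h3
      have h4 : (if v = a then {b} else if v = b then {a} else ∅ : Finset V).card ≤ e v := by
        simp only [e]
        split_ifs <;> simp_all
      have := hD v
      omega
    · intro M hMi
      have h5 := hM M (fun x hx y hy hh => hMi x hx y hy ((hK _ _).2 (Or.inl hh)))
      have h6 : ∑ u ∈ Mᶜ, w u = ∑ u ∈ Mᶜ, w' u + ∑ u ∈ Mᶜ, e u := by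
        rw [← Finset.sum_add_distrib]
        exact Finset.sum_congr rfl fun v _ => (hew v).symm
      have h7 : ∃ c, c ∈ Mᶜ ∧ e c = 1 := by
        by_cases hc : a ∈ M
        · refine ⟨b, ?_, by simp [e]⟩
          rw [Finset.mem_compl]
          intro hbM
          apply hMi a hc b hbM
          simp [hK, hba.symm]
        · exact ⟨a, by simpa using hc, by simp [e]⟩
      obtain ⟨c, hc, hec⟩ := h7
      have h8 := Finset.single_le_sum (f := e) (fun _ _ => Nat.zero_le _) hc
      omega

/-- **Lemma.** Let `i ≥ 1` and `s ≥ 2` be integers, let `R = {u_1, …, u_s}` be a finite set,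
and let `w` assign a positive integer weight to each element with total weight at least `2i`.
Then there is a graph `H` on `R` with at most `i` edges such that `d_H(u) ≤ w(u)` for every
`u`, and for every independent set `M` of `H` with `|M| ≥ 2` one has `Σ_{u ∈ R - M} w(u) ≥ i`. -/
theorem weighted_graph_exists {V : Type*} [Fintype V] [DecidableEq V] (i s : ℕ)
    (hi : 1 ≤ i) (hs : 2 ≤ s) (hcard : Fintype.card V = s) (w : V → ℕ) (hw : ∀ v, 1 ≤ w v)
    (hsum : 2 * i ≤ ∑ v, w v) :
    ∃ (H : SimpleGraph V) (_ : DecidableRel H.Adj),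
      H.edgeFinset.card ≤ i ∧ (∀ v, H.degree v ≤ w v) ∧
      ∀ M : Finset V, (∀ a ∈ M, ∀ b ∈ M, ¬H.Adj a b) → 2 ≤ M.card →
        i ≤ ∑ u ∈ Mᶜ, w u := by
  classical
  by_cases hall : ∀ v, i + w v ≤ ∑ v, w v
  · obtain ⟨H, d, h1, h2, h3⟩ := wge_aux i w hsum hall
    exact ⟨H, d, h1, h2, fun M hM _ => h3 M hM⟩
  push Not at hall
  obtain ⟨a, ha⟩ := hall
  have hsa : w a + ∑ v ∈ Finset.univ.erase a, w v = ∑ v, w v :=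
    Finset.add_sum_erase _ _ (Finset.mem_univ a)
  have hc : (Finset.univ.erase a : Finset V).card ≤ ∑ v ∈ Finset.univ.erase a, w v := by
    rw [Finset.card_eq_sum_ones]
    exact Finset.sum_le_sum fun v _ => hw v
  obtain ⟨H, hadj⟩ : ∃ H : SimpleGraph V, ∀ x y, H.Adj x y ↔ x ≠ y ∧ (x = a ∨ y = a) :=
    ⟨SimpleGraph.mk (fun x y => x ≠ y ∧ (x = a ∨ y = a))
      ⟨fun x y h => ⟨h.1.symm, h.2.symm⟩⟩ ⟨fun x h => h.1 rfl⟩, fun _ _ => Iff.rfl⟩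
  refine ⟨H, Classical.decRel _, ?_, ?_, ?_⟩
  · have : H.edgeFinset ⊆ (Finset.univ.erase a).image (fun v => s(a, v)) := by
      intro x
      induction x with
      | _ x y =>
        simp only [SimpleGraph.mem_edgeFinset, SimpleGraph.mem_edgeSet, hadj, Finset.mem_image,
          Finset.mem_erase, Finset.mem_univ, and_true]
        rintro ⟨h, rfl | rfl⟩
        · exact ⟨y, h.symm, rfl⟩
        · exact ⟨x, h, Sym2.eq_swap⟩
    have h1 := (Finset.card_le_card this).trans Finset.card_image_le
    omega
  · intro v
    rw [← SimpleGraph.card_neighborFinset_eq_degree]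
    by_cases hv : v = a
    · have : H.neighborFinset v ⊆ Finset.univ.erase a := by
        intro x
        simp [hadj]
        grind
      have h1 := Finset.card_le_card this
      subst hv
      omega
    · have : H.neighborFinset v ⊆ {a} := by
        intro x
        simp [hadj]
        grind
      have h1 := Finset.card_le_card this
      have := hw v
      simp only [Finset.card_singleton] at h1
      omega
  · intro M hM h2
    have haM : a ∈ Mᶜ := by
      rw [Finset.mem_compl]
      intro haM
      obtain ⟨b, hb, hba⟩ := Finset.exists_mem_ne (by omega : 1 < M.card) a
      exact hM a haM b hb ((hadj _ _).2 ⟨hba.symm, Or.inl rfl⟩)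
    have := Finset.single_le_sum (f := w) (fun _ _ => Nat.zero_le _) haM
    omega
end

section
/- Let k ≥ 4, let G be a 3-connected k-critical graph, let e = uv ∈ E(G), and let w ∈ V(G) − {u,v} be a vertex such that every proper (k−1)-coloring φ of G − e satisfies φ(w) = φ(u) = φ(v). Let X be a complete graph on k−1 new vertices with vertex set partitioned into nonempty parts S1, S2, S3, and let G' be the graph with vertex set V(G) ∪ V(X) and edge set (E(G) − e) ∪ E(X) ∪ {ua : a ∈ S1} ∪ {vb : b ∈ S2} ∪ {wc : c ∈ S3}. Then G' is a 3-connected k-critical graph. -/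
open SimpleGraph

/-- The graph `G'` of Toft's construction: delete the edge `uv` from `G`, add a complete graph
on a new vertex set `W` partitioned into `S₁ ∪ S₂ ∪ S₃`, and join `u` to `S₁`, `v` to `S₂`,
and `w` to `S₃`. -/
def toftGraph {V W : Type*} (G : SimpleGraph V) (u v w : V) (S₁ S₂ S₃ : Set W) :
    SimpleGraph (V ⊕ W) :=
  SimpleGraph.fromRel (fun a b =>
    match a, b with
    | Sum.inl a, Sum.inl b => G.Adj a b ∧ s(a, b) ≠ s(u, v)
    | Sum.inl a, Sum.inr b => (a = u ∧ b ∈ S₁) ∨ (a = v ∧ b ∈ S₂) ∨ (a = w ∧ b ∈ S₃)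
    | Sum.inr _, Sum.inr _ => True
    | _, _ => False)

section ToftAux

variable {V W : Type*}

lemma toft_inl_inl (G : SimpleGraph V) (u v w : V) (S₁ S₂ S₃ : Set W) (a b : V) :
    (toftGraph G u v w S₁ S₂ S₃).Adj (Sum.inl a) (Sum.inl b) ↔ G.Adj a b ∧ s(a, b) ≠ s(u, v) := by
  have h1 : s(b, a) = s(a, b) := Sym2.eq_swap
  have h2 := G.adj_comm a b
  have h3 : G.Adj a b → a ≠ b := fun h => h.ne
  simp only [toftGraph, SimpleGraph.fromRel_adj, ne_eq, Sum.inl.injEq, h1]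
  tauto

lemma toft_inl_inr (G : SimpleGraph V) (u v w : V) (S₁ S₂ S₃ : Set W) (a : V) (b : W) :
    (toftGraph G u v w S₁ S₂ S₃).Adj (Sum.inl a) (Sum.inr b) ↔
      (a = u ∧ b ∈ S₁) ∨ (a = v ∧ b ∈ S₂) ∨ (a = w ∧ b ∈ S₃) := by
  simp [toftGraph, SimpleGraph.fromRel_adj]

lemma toft_inr_inr (G : SimpleGraph V) (u v w : V) (S₁ S₂ S₃ : Set W) (a b : W) :
    (toftGraph G u v w S₁ S₂ S₃).Adj (Sum.inr a) (Sum.inr b) ↔ a ≠ b := by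
  simp [toftGraph, SimpleGraph.fromRel_adj]

lemma toft_color {α : Type*} (H : SimpleGraph (V ⊕ W)) (φ : V → α) (g : W → α)
    (h1 : ∀ a b, H.Adj (Sum.inl a) (Sum.inl b) → φ a ≠ φ b)
    (h2 : ∀ a b, H.Adj (Sum.inl a) (Sum.inr b) → φ a ≠ g b)
    (h3 : ∀ a b, H.Adj (Sum.inr a) (Sum.inr b) → g a ≠ g b) : Nonempty (H.Coloring α) := by
  refine ⟨SimpleGraph.Coloring.mk (Sum.elim φ g) ?_⟩
  rintro (a | a) (b | b) h
  · exact h1 _ _ h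
  · exact h2 _ _ h
  · exact (h2 _ _ h.symm).symm
  · exact h3 _ _ h

lemma toft_equiv1 {n : ℕ} [Fintype W] (hW : Fintype.card W = n) (a : W) (p : Fin n) :
    ∃ f : W ≃ Fin n, f a = p := by
  let f := Fintype.equivFinOfCardEq hW
  exact ⟨f.trans (Equiv.swap (f a) p), by simp⟩

lemma toft_equiv2 {n : ℕ} [Fintype W] (hW : Fintype.card W = n) (a b : W) (p q : Fin n)
    (hab : a ≠ b) (hpq : p ≠ q) :
    ∃ f : W ≃ Fin n, f a = p ∧ f b = q := by
  obtain ⟨f, hf⟩ := toft_equiv1 hW a p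
  refine ⟨f.trans (Equiv.swap (f b) q), ?_, by simp⟩
  have : f a ≠ f b := fun h => hab (f.injective h)
  rw [Equiv.trans_apply, Equiv.swap_apply_of_ne_of_ne this (by rw [hf]; exact hpq), hf]

lemma toft_equiv3 {n : ℕ} [Fintype W] (hW : Fintype.card W = n) (a b c : W) (p q r : Fin n)
    (hab : a ≠ b) (hac : a ≠ c) (hbc : b ≠ c) (hpq : p ≠ q) (hpr : p ≠ r) (hqr : q ≠ r) :
    ∃ f : W ≃ Fin n, f a = p ∧ f b = q ∧ f c = r := by
  obtain ⟨f, hf, hf'⟩ := toft_equiv2 hW a b p q hab hpq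
  have h1 : f a ≠ f c := fun h => hac (f.injective h)
  have h2 : f b ≠ f c := fun h => hbc (f.injective h)
  refine ⟨f.trans (Equiv.swap (f c) r), ?_, ?_, by simp⟩
  · rw [Equiv.trans_apply, Equiv.swap_apply_of_ne_of_ne h1 (by rw [hf]; exact hpr), hf]
  · rw [Equiv.trans_apply, Equiv.swap_apply_of_ne_of_ne h2 (by rw [hf']; exact hqr), hf']

lemma toft_equivS {n : ℕ} [Fintype W] (hW : Fintype.card W = n) (S₁ S₂ S₃ : Set W)
    (h12 : Disjoint S₁ S₂) (h13 : Disjoint S₁ S₃) (h23 : Disjoint S₂ S₃)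
    (hS₁ : S₁.Nonempty) (hS₂ : S₂.Nonempty) (hS₃ : S₃.Nonempty) (p q r : Fin n) (hpq : p ≠ q) :
    ∃ f : W ≃ Fin n, (∀ x ∈ S₁, f x ≠ p) ∧ (∀ x ∈ S₂, f x ≠ q) ∧ (∀ x ∈ S₃, f x ≠ r) := by
  obtain ⟨a, ha⟩ := hS₁
  obtain ⟨b, hb⟩ := hS₂
  obtain ⟨c, hc⟩ := hS₃
  rw [Set.disjoint_left] at h12 h13 h23
  have hab : a ≠ b := by rintro rfl; exact h12 ha hb
  have hac : a ≠ c := by rintro rfl; exact h13 ha hc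
  have hbc : b ≠ c := by rintro rfl; exact h23 hb hc
  by_cases hr : r = p ∨ r = q
  · obtain ⟨f, hfa, hfb⟩ := toft_equiv2 hW a b q p hab hpq.symm
    refine ⟨f, ?_, ?_, ?_⟩
    · intro x hx h
      have : x = b := f.injective (h.trans hfb.symm)
      subst this; exact h12 hx hb
    · intro x hx h
      have : x = a := f.injective (h.trans hfa.symm)
      subst this; exact h12 ha hx
    · intro x hx h
      rcases hr with rfl | rfl
      · have : x = b := f.injective (h.trans hfb.symm)
        subst this; exact h23 hb hx
      · have : x = a := f.injective (h.trans hfa.symm)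
        subst this; exact h13 ha hx
  · push Not at hr
    obtain ⟨f, hfa, hfb, hfc⟩ := toft_equiv3 hW a b c q r p hab hac hbc hr.2.symm hpq.symm hr.1
    refine ⟨f, ?_, ?_, ?_⟩
    · intro x hx h
      have : x = c := f.injective (h.trans hfc.symm)
      subst this; exact h13 hx hc
    · intro x hx h
      have : x = a := f.injective (h.trans hfa.symm)
      subst this; exact h12 ha hx
    · intro x hx h
      have : x = b := f.injective (h.trans hfb.symm)
      subst this; exact h23 hb hx

lemma toft_critical [Fintype W] (k : ℕ) (hk : 4 ≤ k) (G : SimpleGraph V)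
    (hG : IsKCritical k G)
    (u v w : V) (huv : G.Adj u v)
    (hcol : ∀ C : (G.deleteEdges {s(u, v)}).Coloring (Fin (k - 1)), C w = C u ∧ C u = C v)
    (hW : Fintype.card W = k - 1) (S₁ S₂ S₃ : Set W)
    (hunion : S₁ ∪ S₂ ∪ S₃ = Set.univ)
    (h12 : Disjoint S₁ S₂) (h13 : Disjoint S₁ S₃) (h23 : Disjoint S₂ S₃)
    (hS₁ : S₁.Nonempty) (hS₂ : S₂.Nonempty) (hS₃ : S₃.Nonempty) :
    IsKCritical k (toftGraph G u v w S₁ S₂ S₃) := by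
  classical
  have hdel : ∀ a b, G.Adj a b → (G.deleteEdges {s(a, b)}).Colorable (k - 1) := by
    intro a b hab
    apply hG.2
    refine lt_of_le_of_ne (G.deleteEdges_le _) ?_
    intro h
    have : (G.deleteEdges {s(a, b)}).Adj a b := by rw [h]; exact hab
    simp at this
  obtain ⟨φ⟩ := hdel u v huv
  obtain ⟨hwu, huv'⟩ := hcol φ
  have hφ : ∀ a b, G.Adj a b ∧ s(a, b) ≠ s(u, v) → φ a ≠ φ b := by
    intro a b h
    exact φ.valid (by simpa [SimpleGraph.deleteEdges_adj] using h)
  have hφ3 : ∀ a, (a = u ∨ a = v ∨ a = w) → φ a = φ u := by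
    rintro a (rfl | rfl | rfl)
    · rfl
    · exact huv'.symm
    · exact hwu
  have hφ4 : ∀ (a : V) (b : W), ((a = u ∧ b ∈ S₁) ∨ (a = v ∧ b ∈ S₂) ∨ (a = w ∧ b ∈ S₃)) →
      φ a = φ u := fun a b h => hφ3 a (by tauto)
  refine ⟨?_, ?_⟩
  · apply le_antisymm
    · rw [SimpleGraph.chromaticNumber_le_iff_colorable]
      obtain ⟨x, _⟩ := hS₁
      obtain ⟨f, hf⟩ := toft_equiv1 hW x (φ u)
      obtain ⟨C⟩ := toft_color (toftGraph G u v w S₁ S₂ S₃) (fun a => some (φ a))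
        (fun z => if z = x then none else some (f z))
        (by
          intro a b h
          rw [toft_inl_inl] at h
          simpa using hφ a b h)
        (by
          intro a b h
          rw [toft_inl_inr] at h
          have := hφ4 a b h
          by_cases hb : b = x
          · simp [hb]
          · simp only [hb, if_false, ne_eq, Option.some.injEq, this, ← hf]
            exact fun h => hb (f.injective h).symm)
        (by
          intro a b h
          rw [toft_inr_inr] at h
          by_cases ha : a = x <;> by_cases hb : b = x <;> simp [ha, hb]
          · exact h (ha.trans hb.symm)
          · exact h)
      have := C.colorable
      simp only [Fintype.card_option, Fintype.card_fin] at this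
      rwa [Nat.sub_add_cancel (by omega)] at this
    · rw [SimpleGraph.le_chromaticNumber_iff_colorable]
      intro m hm
      by_contra hlt
      obtain ⟨C⟩ := hm.mono (show m ≤ k - 1 by omega)
      obtain ⟨e1, e2⟩ := hcol (SimpleGraph.Coloring.mk (fun a => C (Sum.inl a)) (by
        intro a b h
        apply C.valid
        rw [toft_inl_inl]
        simpa [SimpleGraph.deleteEdges_adj] using h))
      change C (Sum.inl w) = C (Sum.inl u) at e1
      change C (Sum.inl u) = C (Sum.inl v) at e2
      have hinj : Function.Injective (fun b : W => C (Sum.inr b)) := by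
        intro a b h
        by_contra hab
        exact C.valid ((toft_inr_inr G u v w S₁ S₂ S₃ a b).2 hab) h
      have hsurj := ((Fintype.bijective_iff_injective_and_card _).2
        ⟨hinj, by simp [hW]⟩).2
      obtain ⟨b, hb⟩ := hsurj (C (Sum.inl u))
      change C (Sum.inr b) = _ at hb
      have hbm : b ∈ S₁ ∪ S₂ ∪ S₃ := by rw [hunion]; trivial
      rcases hbm with (h | h) | h
      · exact C.valid ((toft_inl_inr G u v w S₁ S₂ S₃ u b).2 (by tauto)) hb.symm
      · exact C.valid ((toft_inl_inr G u v w S₁ S₂ S₃ v b).2 (by tauto)) (by rw [hb, e2])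
      · exact C.valid ((toft_inl_inr G u v w S₁ S₂ S₃ w b).2 (by tauto)) (by rw [hb, e1])
  · intro H hH
    have hle := hH.le
    obtain ⟨x, y, hxy, hnxy⟩ : ∃ x y, (toftGraph G u v w S₁ S₂ S₃).Adj x y ∧ ¬ H.Adj x y := by
      by_contra hcon
      push Not at hcon
      exact absurd hH.le.antisymm (fun h => hH.ne (h (fun x y hxy => hcon x y hxy)))
    have key : ∀ (a : V) (b : W), (toftGraph G u v w S₁ S₂ S₃).Adj (Sum.inl a) (Sum.inr b) →
        ¬ H.Adj (Sum.inl a) (Sum.inr b) → H.Colorable (k - 1) := by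
      intro a b hab hn
      obtain ⟨f, hf⟩ := toft_equiv1 hW b (φ u)
      refine toft_color H φ f ?_ ?_ ?_
      · intro a b h
        exact hφ a b ((toft_inl_inl ..).1 (hle h))
      · intro a' b' h heq
        have h' := (toft_inl_inr ..).1 (hle h)
        have hab' := (toft_inl_inr ..).1 hab
        rw [hφ4 a' b' h', ← hf] at heq
        have := f.injective heq
        subst this
        rw [Set.disjoint_left] at h12 h13 h23
        have h1 := @h12 b
        have h2 := @h13 b
        have h3 := @h23 b
        have : a' = a := by
          rcases h' with ⟨rfl, h'⟩ | ⟨rfl, h'⟩ | ⟨rfl, h'⟩ <;>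
          rcases hab' with ⟨rfl, h''⟩ | ⟨rfl, h''⟩ | ⟨rfl, h''⟩ <;> first | rfl | (exfalso; tauto)
        subst this
        exact hn h
      · intro a b h heq
        exact (toft_inr_inr ..).1 (hle h) (f.injective heq)
    rcases x with a | a <;> rcases y with b | b
    · obtain ⟨hab, hne⟩ := (toft_inl_inl ..).1 hxy
      obtain ⟨ψ⟩ := hdel a b hab
      have huvne : ψ u ≠ ψ v := ψ.valid (by
        simp only [SimpleGraph.deleteEdges_adj, Set.mem_singleton_iff]
        exact ⟨huv, fun h => hne h.symm⟩)
      obtain ⟨f, f1, f2, f3⟩ := toft_equivS hW S₁ S₂ S₃ h12 h13 h23 hS₁ hS₂ hS₃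
        (ψ u) (ψ v) (ψ w) huvne
      refine toft_color H ψ f ?_ ?_ ?_
      · intro a' b' h
        apply ψ.valid
        simp only [SimpleGraph.deleteEdges_adj, Set.mem_singleton_iff]
        refine ⟨((toft_inl_inl ..).1 (hle h)).1, fun h' => hnxy ?_⟩
        rcases Sym2.eq_iff.1 h' with ⟨rfl, rfl⟩ | ⟨rfl, rfl⟩
        · exact h
        · exact h.symm
      · intro a' b' h
        rcases (toft_inl_inr ..).1 (hle h) with ⟨rfl, h'⟩ | ⟨rfl, h'⟩ | ⟨rfl, h'⟩
        · exact (f1 _ h').symm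
        · exact (f2 _ h').symm
        · exact (f3 _ h').symm
      · intro a b h heq
        exact (toft_inr_inr ..).1 (hle h) (f.injective heq)
    · exact key a b hxy hnxy
    · exact key b a hxy.symm (fun h => hnxy h.symm)
    · have hab := (toft_inr_inr ..).1 hxy
      obtain ⟨f, hf⟩ := toft_equiv1 hW a (φ u)
      refine toft_color H φ (fun z => if z = a then f b else f z) ?_ ?_ ?_
      · intro a b h
        exact hφ a b ((toft_inl_inl ..).1 (hle h))
      · intro a' b' h heq
        have h' := (toft_inl_inr ..).1 (hle h)
        rw [hφ4 a' b' h', ← hf] at heq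
        by_cases hb : b' = a
        · rw [if_pos hb] at heq
          exact hab (f.injective heq)
        · rw [if_neg hb] at heq
          exact hb (f.injective heq).symm
      · intro a' b' h heq
        have hne := (toft_inr_inr ..).1 (hle h)
        by_cases ha : a' = a <;> by_cases hb : b' = a
        · exact hne (ha.trans hb.symm)
        · simp only [ha, hb, if_true, if_false] at heq
          have := f.injective heq
          subst this; subst ha
          exact hnxy h
        · simp only [ha, hb, if_true, if_false] at heq
          have := f.injective heq
          subst this; subst hb
          exact hnxy h.symm
        · simp only [ha, hb, if_false] at heq
          exact hne (f.injective heq)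

lemma toft_pre [Fintype V] (G : SimpleGraph V) (h3 : IsThreeConnected G) (u v : V)
    (huv : G.Adj u v) (A : Set V) (hA : A.ncard ≤ 2) (h : A.ncard ≤ 1 ∨ u ∈ A ∨ v ∈ A) :
    ((G.deleteEdges {s(u, v)}).induce Aᶜ).Preconnected := by
  classical
  by_cases huA : u ∈ A ∨ v ∈ A
  · have hc := (h3.2 A hA).preconnected
    have : (G.deleteEdges {s(u, v)}).induce Aᶜ = G.induce Aᶜ := by
      ext ⟨a, ha⟩ ⟨b, hb⟩
      simp only [SimpleGraph.comap_adj, SimpleGraph.deleteEdges_adj, Set.mem_singleton_iff,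
        Function.Embedding.subtype_apply, and_iff_left_iff_imp]
      intro _ he
      rcases Sym2.eq_iff.1 he with ⟨rfl, rfl⟩ | ⟨rfl, rfl⟩
      · exact huA.elim ha hb
      · exact huA.elim hb ha
    rw [this]; exact hc
  · push Not at huA
    obtain ⟨hu, hv⟩ := huA
    have hA1 : A.ncard ≤ 1 := by tauto
    set K := (G.deleteEdges {s(u, v)}).induce Aᶜ with hK
    have r1 : ∀ (x : V) (hx : x ∉ A), x ≠ u → K.Reachable ⟨x, hx⟩ ⟨v, hv⟩ := by
      intro x hx hxu
      have hc := (h3.2 (insert u A) ((Set.ncard_insert_le u A).trans (by omega))).preconnected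
      let F : G.induce (insert u A)ᶜ →g K :=
        ⟨fun z => ⟨z.1, fun hz => z.2 (Or.inr hz)⟩, by
          rintro ⟨a, ha⟩ ⟨b, hb⟩ hab
          simp only [SimpleGraph.comap_adj, Function.Embedding.subtype_apply] at hab
          simp only [hK, SimpleGraph.comap_adj, SimpleGraph.deleteEdges_adj,
            Set.mem_singleton_iff, Function.Embedding.subtype_apply]
          refine ⟨hab, fun he => ?_⟩
          rcases Sym2.eq_iff.1 he with ⟨rfl, rfl⟩ | ⟨rfl, rfl⟩
          · exact ha (Or.inl rfl)
          · exact hb (Or.inl rfl)⟩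
      exact (hc ⟨x, by simp [hx, hxu]⟩ ⟨v, by simp [hv, huv.ne']⟩).map F
    have r2 : K.Reachable ⟨u, hu⟩ ⟨v, hv⟩ := by
      have hcard : (insert v A).ncard ≤ 2 := (Set.ncard_insert_le v A).trans (by omega)
      have hc := (h3.2 (insert v A) hcard).preconnected
      have hcc := Set.ncard_add_ncard_compl (insert v A)
      have h4 := h3.1
      rw [Nat.card_eq_fintype_card] at hcc
      have hnt : (insert v A)ᶜ.Nontrivial := by
        rw [← Set.one_lt_ncard_iff_nontrivial]; omega
      haveI := hnt.coe_sort
      obtain ⟨⟨y, hy⟩, hyu⟩ := hc.exists_adj_of_nontrivial ⟨u, by simp [hu, huv.ne]⟩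
      simp only [SimpleGraph.comap_adj, Function.Embedding.subtype_apply] at hyu
      simp only [Set.mem_compl_iff, Set.mem_insert_iff, not_or] at hy
      have hadj : K.Adj ⟨u, hu⟩ ⟨y, hy.2⟩ := by
        simp only [hK, SimpleGraph.comap_adj, SimpleGraph.deleteEdges_adj,
            Set.mem_singleton_iff, Function.Embedding.subtype_apply]
        refine ⟨hyu, fun he => ?_⟩
        rcases Sym2.eq_iff.1 he with ⟨_, h⟩ | ⟨_, h⟩
        · exact hy.1 h
        · exact hyu.ne h.symm
      exact hadj.reachable.trans (r1 y hy.2 hyu.ne')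
    have r3 : ∀ x : (Aᶜ : Set V), K.Reachable x ⟨v, hv⟩ := by
      rintro ⟨x, hx⟩
      by_cases hxu : x = u
      · subst hxu; exact r2
      · exact r1 x hx hxu
    exact fun x y => (r3 x).trans (r3 y).symm

lemma toft_uv [Fintype V] (G : SimpleGraph V) (h3 : IsThreeConnected G) (u v : V)
    (A : Set V) (hA : A.ncard ≤ 2) (hu : u ∉ A) (hv : v ∉ A) (x : (Aᶜ : Set V)) :
    ((G.deleteEdges {s(u, v)}).induce Aᶜ).Reachable x ⟨u, hu⟩ ∨
    ((G.deleteEdges {s(u, v)}).induce Aᶜ).Reachable x ⟨v, hv⟩ := by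
  have hc := (h3.2 A hA).preconnected x ⟨u, hu⟩
  rw [SimpleGraph.reachable_iff_reflTransGen] at hc
  induction hc using Relation.ReflTransGen.head_induction_on with
  | refl => exact Or.inl (SimpleGraph.Reachable.refl _)
  | @head a b hab _ ih =>
    by_cases he : s(a.1, b.1) = s(u, v)
    · rcases Sym2.eq_iff.1 he with ⟨h, _⟩ | ⟨h, _⟩
      · left
        have : a = ⟨u, hu⟩ := Subtype.ext h
        rw [this]
      · right
        have : a = ⟨v, hv⟩ := Subtype.ext h
        rw [this]
    · have : ((G.deleteEdges {s(u, v)}).induce Aᶜ).Adj a b := by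
        simp only [SimpleGraph.comap_adj, SimpleGraph.deleteEdges_adj,
            Set.mem_singleton_iff, Function.Embedding.subtype_apply]
        exact ⟨hab, he⟩
      exact ih.imp this.reachable.trans this.reachable.trans

lemma toft_conn [Fintype V] [Fintype W] (k : ℕ) (hk : 4 ≤ k) (G : SimpleGraph V)
    (h3 : IsThreeConnected G)
    (u v w : V) (huv : G.Adj u v) (hwu : w ≠ u) (hwv : w ≠ v)
    (hW : Fintype.card W = k - 1) (S₁ S₂ S₃ : Set W)
    (h12 : Disjoint S₁ S₂) (h13 : Disjoint S₁ S₃) (h23 : Disjoint S₂ S₃)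
    (hS₁ : S₁.Nonempty) (hS₂ : S₂.Nonempty) (hS₃ : S₃.Nonempty) :
    IsThreeConnected (toftGraph G u v w S₁ S₂ S₃) := by
  classical
  have hc3 := h3.1
  refine ⟨by rw [Fintype.card_sum]; omega, fun s hs => ?_⟩
  obtain ⟨a, ha⟩ := hS₁
  obtain ⟨b, hb⟩ := hS₂
  obtain ⟨c, hc⟩ := hS₃
  rw [Set.disjoint_left] at h12 h13 h23
  have hab : a ≠ b := by rintro rfl; exact h12 ha hb
  have hac : a ≠ c := by rintro rfl; exact h13 ha hc
  have hbc : b ≠ c := by rintro rfl; exact h23 hb hc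
  set G' := toftGraph G u v w S₁ S₂ S₃ with hG'
  set K := G'.induce sᶜ with hK
  set A : Set V := Sum.inl ⁻¹' s with hAdef
  set B : Set W := Sum.inr ⁻¹' s with hBdef
  have hsum : A.ncard + B.ncard = s.ncard := by
    rw [← Set.ncard_image_of_injective A (Sum.inl_injective (β := W)),
      ← Set.ncard_image_of_injective B (Sum.inr_injective (α := V)), ← Set.ncard_union_eq]
    · rw [hAdef, hBdef, Set.image_preimage_inl_union_image_preimage_inr]
    · rw [Set.disjoint_left]
      rintro _ ⟨x, _, rfl⟩ ⟨y, _, h⟩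
      simp at h
  have hno3 : ∀ x y z, x ∈ s → y ∈ s → z ∈ s → x ≠ y → x ≠ z → y ≠ z → False := by
    intro x y z hx hy hz hxy hxz hyz
    have h1 : ({x, y, z} : Set (V ⊕ W)) ⊆ s := by
      rintro t (rfl | rfl | rfl) <;> assumption
    have h2 := Set.ncard_le_ncard h1
    have h3 : ({x, y, z} : Set (V ⊕ W)).ncard = 3 :=
      Set.ncard_eq_three.2 ⟨x, y, z, hxy, hxz, hyz, rfl⟩
    omega
  obtain ⟨b0, hb0⟩ : ∃ b0 : W, Sum.inr b0 ∉ s := by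
    by_contra hcon
    push Not at hcon
    exact hno3 _ _ _ (hcon a) (hcon b) (hcon c) (by simpa) (by simpa) (by simpa)
  have rW : ∀ (x : W) (hx : Sum.inr x ∉ s), K.Reachable ⟨Sum.inr x, hx⟩ ⟨Sum.inr b0, hb0⟩ := by
    intro x hx
    by_cases h : x = b0
    · subst h; exact SimpleGraph.Reachable.refl _
    · apply SimpleGraph.Adj.reachable
      exact (toft_inr_inr G u v w S₁ S₂ S₃ x b0).2 h
  have rE : ∀ (t : V) (x : W) (ht : Sum.inl t ∉ s), Sum.inr x ∉ s →
      G'.Adj (Sum.inl t) (Sum.inr x) → K.Reachable ⟨Sum.inl t, ht⟩ ⟨Sum.inr b0, hb0⟩ := by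
    intro t x ht hx h
    have : K.Adj ⟨Sum.inl t, ht⟩ ⟨Sum.inr x, hx⟩ := h
    exact this.reachable.trans (rW x hx)
  have ea : G'.Adj (Sum.inl u) (Sum.inr a) := (toft_inl_inr ..).2 (by tauto)
  have eb : G'.Adj (Sum.inl v) (Sum.inr b) := (toft_inl_inr ..).2 (by tauto)
  have ec : G'.Adj (Sum.inl w) (Sum.inr c) := (toft_inl_inr ..).2 (by tauto)
  let F : (G.deleteEdges {s(u, v)}).induce Aᶜ →g K :=
    ⟨fun z => ⟨Sum.inl z.1, z.2⟩, by
      rintro ⟨p, hp⟩ ⟨q, hq⟩ hpq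
      simp only [SimpleGraph.comap_adj, SimpleGraph.deleteEdges_adj,
            Set.mem_singleton_iff, Function.Embedding.subtype_apply] at hpq
      exact (toft_inl_inl G u v w S₁ S₂ S₃ p q).2 hpq⟩
  have rV : ∀ (x : V) (hx : Sum.inl x ∉ s), K.Reachable ⟨Sum.inl x, hx⟩ ⟨Sum.inr b0, hb0⟩ := by
    intro x hx
    by_cases hcase : A.ncard ≤ 1 ∨ u ∈ A ∨ v ∈ A
    · have hpre := toft_pre G h3 u v huv A (by omega) hcase
      obtain ⟨t, y, ht, hy, hty⟩ : ∃ (t : V) (y : W), Sum.inl t ∉ s ∧ Sum.inr y ∉ s ∧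
          G'.Adj (Sum.inl t) (Sum.inr y) := by
        by_contra hcon
        push Not at hcon
        have h1 : Sum.inl u ∈ s ∨ Sum.inr a ∈ s := by
          by_contra h; push Not at h; exact hcon _ _ h.1 h.2 ea
        have h2 : Sum.inl v ∈ s ∨ Sum.inr b ∈ s := by
          by_contra h; push Not at h; exact hcon _ _ h.1 h.2 eb
        have h3 : Sum.inl w ∈ s ∨ Sum.inr c ∈ s := by
          by_contra h; push Not at h; exact hcon _ _ h.1 h.2 ec
        have huv' := huv.ne
        rcases h1 with h1 | h1 <;> rcases h2 with h2 | h2 <;> rcases h3 with h3 | h3 <;>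
          refine hno3 _ _ _ h1 h2 h3 ?_ ?_ ?_ <;>
          simp [hab, hac, hbc, huv', hwu.symm, hwv.symm]
      exact ((hpre ⟨x, hx⟩ ⟨t, ht⟩).map F).trans (rE t y ht hy hty)
    · push Not at hcase
      obtain ⟨h1, hu, hv⟩ := hcase
      have hB0 : B = ∅ := by
        rw [← Set.ncard_eq_zero]; omega
      have hBn : ∀ y : W, Sum.inr y ∉ s := by
        intro y hy
        have : y ∈ B := hy
        rw [hB0] at this
        exact this
      rcases toft_uv G h3 u v A (by omega) hu hv ⟨x, hx⟩ with h | h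
      · exact (h.map F).trans (rE u a hu (hBn a) ea)
      · exact (h.map F).trans (rE v b hv (hBn b) eb)
  have rAll : ∀ x, K.Reachable x ⟨Sum.inr b0, hb0⟩ := by
    rintro ⟨x | x, hx⟩
    · exact rV x hx
    · exact rW x hx
  haveI : Nonempty (sᶜ : Set (V ⊕ W)) := ⟨⟨Sum.inr b0, hb0⟩⟩
  exact ⟨fun x y => (rAll x).trans (rAll y).symm⟩

end ToftAux

/-- **Claim (Toft's construction).** Let `k ≥ 4`, let `G` be a 3-connected `k`-critical graph,
let `e = uv ∈ E(G)` and let `w ∈ V(G) - {u,v}` be such that every proper `(k-1)`-coloring `φ`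
of `G - e` satisfies `φ(w) = φ(u) = φ(v)`. Let `X` be a complete graph on `k-1` new vertices
whose vertex set is partitioned into nonempty parts `S₁, S₂, S₃`, and let `G'` be obtained
from `G - e` and `X` by joining `u` to `S₁`, `v` to `S₂` and `w` to `S₃`. Then `G'` is a
3-connected `k`-critical graph. -/
theorem toftConstruction_kCritical_threeConnected {V W : Type*} [Fintype V] [Fintype W]
    [DecidableEq V] (k : ℕ) (hk : 4 ≤ k) (G : SimpleGraph V) [DecidableRel G.Adj]
    (hG : IsKCritical k G) (h3 : IsThreeConnected G)
    (u v w : V) (huv : G.Adj u v) (hwu : w ≠ u) (hwv : w ≠ v)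
    (hcol : ∀ C : (G.deleteEdges {s(u, v)}).Coloring (Fin (k - 1)), C w = C u ∧ C u = C v)
    (hW : Fintype.card W = k - 1) (S₁ S₂ S₃ : Set W)
    (hunion : S₁ ∪ S₂ ∪ S₃ = Set.univ)
    (h12 : Disjoint S₁ S₂) (h13 : Disjoint S₁ S₃) (h23 : Disjoint S₂ S₃)
    (hS₁ : S₁.Nonempty) (hS₂ : S₂.Nonempty) (hS₃ : S₃.Nonempty) :
    IsKCritical k (toftGraph G u v w S₁ S₂ S₃) ∧
      IsThreeConnected (toftGraph G u v w S₁ S₂ S₃) := by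
  exact ⟨toft_critical k hk G hG u v w huv hcol hW S₁ S₂ S₃ hunion h12 h13 h23 hS₁ hS₂ hS₃,
    toft_conn k hk G h3 u v w huv hwu hwv hW S₁ S₂ S₃ h12 h13 h23 hS₁ hS₂ hS₃⟩
end
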